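/- arXiv:2311.13823 — 2 statements merged into one kernel-verified Lean document; each statement's English description precedes it below -/
import Mathlib

section
/- β₁ = 1 and β₂ = (1+√5)/2. In particular, for β ∈ (1,2], the set 𝐔_β contains a sequence of smallest period 2 if and only if β > (1+√5)/2. -/
open Filter Set

noncomputable section

namespace FatSierpinski

/-- The digit set Ω = {(0,0),(1,0),(0,1)} ⊆ ℝ². -/
def OmegaR : Set (ℝ × ℝ) := {(0, 0), (1, 0), (0, 1)}

/-- The fat Sierpinski gasket `S_β` (sequences are 0-indexed: `d i` is the digit d_{i+1}). -/
def Sfat (β : ℝ) : Set (ℝ × ℝ) :=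
  {x | ∃ d : ℕ → ℝ × ℝ, (∀ i, d i ∈ OmegaR) ∧ x = ∑' i : ℕ, (β ^ (i + 1))⁻¹ • d i}

/-- The convex hull `Δ_β` of `S_β`. -/
def Delta (β : ℝ) : Set (ℝ × ℝ) := convexHull ℝ (Sfat β)

/-- The map `f_d(x) = (x + d)/β`. -/
def fmap (β : ℝ) (d : ℝ × ℝ) (x : ℝ × ℝ) : ℝ × ℝ := β⁻¹ • (x + d)

/-- The overlap region `O_β = ⋃_{c ≠ d ∈ Ω} f_c(Δ_β) ∩ f_d(Δ_β)`. -/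
def Ofat (β : ℝ) : Set (ℝ × ℝ) :=
  ⋃ c ∈ OmegaR, ⋃ d ∈ OmegaR, ⋃ (_ : c ≠ d), (fmap β c '' Delta β) ∩ (fmap β d '' Delta β)

/-- The univoque set of codings `𝐔_β`. -/
def Ufat (β : ℝ) : Set (ℕ → ℝ × ℝ) :=
  {d | (∀ i, d i ∈ OmegaR) ∧
    ∀ n : ℕ, (∑' i : ℕ, (β ^ (i + 1))⁻¹ • d (n + i)) ∉ Ofat β}

/-- `d` has smallest period `k`. -/
def SmallestPeriod {α : Type*} (d : ℕ → α) (k : ℕ) : Prop :=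
  0 < k ∧ (∀ i, d (i + k) = d i) ∧ ∀ j, 0 < j → j < k → ∃ i, d (i + j) ≠ d i

/-- The critical base `β_k`. -/
def betaK (k : ℕ) : ℝ :=
  sInf {β : ℝ | β ∈ Set.Ioc (1 : ℝ) 2 ∧ ∃ d ∈ Ufat β, SmallestPeriod d k}

/-- Strict lexicographic order on sequences. -/
def seqLT {α : Type*} [Preorder α] (a b : ℕ → α) : Prop :=
  ∃ n, (∀ i < n, a i = b i) ∧ a n < b n

/-- Weak lexicographic order on sequences. -/
def seqLE {α : Type*} [Preorder α] (a b : ℕ → α) : Prop :=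
  seqLT a b ∨ a = b

/-- `a` is a 0-1 sequence. -/
def IsBinary (a : ℕ → ℕ) : Prop := ∀ i, a i ≤ 1

/-- `a` does not end with `0^∞`. -/
def NotEndInZeros (a : ℕ → ℕ) : Prop := ∀ N, ∃ i, N ≤ i ∧ a i ≠ 0

/-- `∑_{i=1}^∞ a_i β^{-i} = 1` (0-indexed: `a i` is a_{i+1}). -/
def SumsToOne (β : ℝ) (a : ℕ → ℕ) : Prop :=
  ∑' i : ℕ, (a i : ℝ) / β ^ (i + 1) = 1

/-- `a` is the quasi-greedy β-expansion of 1: the lexicographically largest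
binary sequence not ending in `0^∞` whose value in base β is 1. -/
def IsQuasiGreedy (β : ℝ) (a : ℕ → ℕ) : Prop :=
  IsBinary a ∧ NotEndInZeros a ∧ SumsToOne β a ∧
    ∀ b : ℕ → ℕ, IsBinary b → NotEndInZeros b → SumsToOne β b → seqLE b a

/-- `w⁺`: replace the final digit 0 of a block by 1. -/
def plusBlock (w : List ℕ) : List ℕ := w.dropLast ++ [1]

/-- `Θ` flips the outer digits of every consecutive triple
(000↦101, 001↦100, 100↦001, 101↦000). -/
def thetaBlock (w : List ℕ) : List ℕ :=
  w.mapIdx fun i x => if i % 3 = 1 then x else 1 - x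

/-- `tB n` is the block `t_{n+1}`: `t_1 = 100`, `t_{n+1} = t_n⁺ Θ(t_n⁺)`. -/
def tB : ℕ → List ℕ
  | 0 => [1, 0, 0]
  | n + 1 => plusBlock (tB n) ++ thetaBlock (plusBlock (tB n))

/-- The sequence `u w^∞` (the block `u` followed by `w` repeated forever). -/
def prefixPeriodic (u w : List ℕ) : ℕ → ℕ := fun i =>
  if i < u.length then u.getD i 0 else w.getD ((i - u.length) % w.length) 0

/-- The periodic sequence `w^∞`. -/
def periodicSeq (w : List ℕ) : ℕ → ℕ := fun i => w.getD (i % w.length) 0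

/-- The componentwise limit `λ = 101001000101…` of the blocks `t_n`
(the digit `λ_{i+1}` has stabilized in `t_{i+2} = tB (i+1)`). -/
def lamSeq : ℕ → ℕ := fun i => (tB (i + 1)).getD i 0

/-- `β_c` is the unique base in (1,2] with `∑ λ_i β^{-i} = 1`. -/
def IsBetaC (β : ℝ) : Prop := β ∈ Set.Ioc (1 : ℝ) 2 ∧ SumsToOne β lamSeq

/-- The sequence `t_{n+2}⁺ (Θ(t_{n+2}))^∞`, the quasi-greedy expansion of 1 for `β̂_n`. -/
def hatSeq (n : ℕ) : ℕ → ℕ :=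
  prefixPeriodic (plusBlock (tB (n + 1))) (thetaBlock (tB (n + 1)))

/-- The Sharkovskii ordering `k ⊳ ℓ` on positive integers. -/
def Sharkovskii (k l : ℕ) : Prop :=
  ∃ a b c d : ℕ, k = 2 ^ a * (2 * b + 1) ∧ l = 2 ^ c * (2 * d + 1) ∧ k ≠ l ∧
    ((1 ≤ b ∧ d = 0) ∨ (1 ≤ b ∧ 1 ≤ d ∧ (a < c ∨ (a = c ∧ b < d))) ∨
      (b = 0 ∧ d = 0 ∧ c < a))

/-- The digit set Ω as pairs of naturals (for combinatorial statements). -/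
def OmegaD : Set (ℕ × ℕ) := {(0, 0), (1, 0), (0, 1)}

/-- The periodic extension `(d_1 … d_k)^∞` of a block. -/
def cyc (d : List (ℕ × ℕ)) : ℕ → ℕ × ℕ := fun i => d.getD (i % d.length) (0, 0)

/-- Strict lexicographic order on lists. -/
def listLT (u v : List ℕ) : Prop := List.Lex (· < ·) u v

/-- Weak lexicographic order on lists. -/
def listLE (u v : List ℕ) : Prop := listLT u v ∨ u = v

/-- The first components `d_1¹ … d_k¹` of a block over Ω. -/
def comp1 (d : List (ℕ × ℕ)) : List ℕ := d.map Prod.fst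

/-- The second components `d_1² … d_k²` of a block over Ω. -/
def comp2 (d : List (ℕ × ℕ)) : List ℕ := d.map Prod.snd

/-- The digits `(1 - d_1⁺) … (1 - d_k⁺)` where `d⁺ = d¹ + d²`. -/
def comp3 (d : List (ℕ × ℕ)) : List ℕ := d.map fun x => 1 - x.1 - x.2

/-- Cyclic shift of a list by `j`. -/
def rot {α : Type*} (j : ℕ) (l : List α) : List α := l.drop j ++ l.take j

/-- `d` is a representation of the binary block `a`. -/
def IsRepresentation (a : List ℕ) (d : List (ℕ × ℕ)) : Prop :=
  d.length = a.length ∧ (∀ x ∈ d, x ∈ OmegaD) ∧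
  SmallestPeriod (cyc d) a.length ∧
  comp1 d = a ∧ listLE (comp3 d) (comp2 d) ∧ listLE (comp2 d) a ∧
  ∀ j < a.length,
    listLE (comp1 (rot j d)) a ∧ listLE (comp2 (rot j d)) a ∧ listLE (comp3 (rot j d)) a

/-- A binary block is admissible if it has a representation. -/
def IsAdmissible (a : List ℕ) : Prop := ∃ d, IsRepresentation a d

/-- The `i`-th consecutive triple of a block (0-indexed). -/
def tripleAt (a : List ℕ) (i : ℕ) : List ℕ :=
  [a.getD (3 * i) 0, a.getD (3 * i + 1) 0, a.getD (3 * i + 2) 0]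

/-- The edges of the directed graph on {000, 001, 100, 101} defining the subshift `X`. -/
def XEdge (u v : List ℕ) : Prop :=
  (u, v) ∈ ({([1,0,1], [0,0,1]), ([1,0,1], [0,0,0]), ([0,0,1], [0,0,0]),
             ([0,0,0], [1,0,1]), ([0,0,0], [1,0,0]), ([1,0,0], [1,0,1])} :
      Set (List ℕ × List ℕ))

/-!
Measure a point of the triangle `Δ_β` by its three barycentric coordinates, one for each digit
`c ∈ Ω`, scaled so that they add up to `1 / (β - 1)`. The piece `f_c(Δ_β)` is then cut out of `Δ_β`
by the single condition that the `c`-th coordinate is at least `1 / β`, and the `c`-th coordinate of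
the point coded by `d` is `∑ β⁻ⁱ` over the positions `i` at which the digit `c` occurs. Hence `d` is
univoque iff, for every tail of `d`, each digit other than the first one has coordinate `< 1 / β`.
For a constant sequence those coordinates vanish, while for `(c d)^∞` with `c ≠ d` the only nonzero
one is `1 / (β² - 1)`, and `1 / (β² - 1) < 1 / β` says exactly that `β` exceeds the golden ratio.
-/

section SmallestPeriod

variable {α : Type*}

lemma smallestPeriod_const_one (c : α) : SmallestPeriod (fun _ => c) 1 :=
  ⟨one_pos, fun _ => rfl, fun _ hpos hlt => by lia⟩

lemma smallestPeriod_two_iff {d : ℕ → α} :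
    SmallestPeriod d 2 ↔ Function.Periodic d 2 ∧ d 0 ≠ d 1 := by
  refine ⟨fun ⟨_, hper, hmin⟩ => ⟨hper, fun heq => ?_⟩,
    fun ⟨hper, hne⟩ => ⟨two_pos, hper, fun j hpos hlt => ?_⟩⟩
  · have hconst (i : ℕ) : d i = d 0 := by
      rw [← Function.Periodic.map_mod_nat hper i]
      rcases Nat.mod_two_eq_zero_or_one i with h | h <;> rw [h]
      exact heq.symm
    obtain ⟨i, hi⟩ := hmin 1 one_pos one_lt_two
    exact hi ((hconst _).trans (hconst i).symm)
  · obtain rfl : j = 1 := by lia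
    exact ⟨0, hne.symm⟩

end SmallestPeriod

variable {β : ℝ}

lemma goldenRatio_lt_iff (hβ : 0 ≤ β) : Real.goldenRatio < β ↔ β + 1 < β ^ 2 := by
  have hfactor : β ^ 2 - (β + 1) = (β - Real.goldenRatio) * (β - Real.goldenConj) := by
    linear_combination β * Real.goldenRatio_add_goldenConj - Real.goldenRatio_mul_goldenConj
  have hpos : 0 < β - Real.goldenConj := by linarith [Real.goldenConj_neg]
  rw [← sub_pos, ← sub_pos (a := β ^ 2), hfactor, mul_pos_iff_of_pos_right hpos]

lemma hasSum_inv_pow_succ (hβ : 1 < β) :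
    HasSum (fun i : ℕ => (β ^ (i + 1))⁻¹) (1 / (β - 1)) := by
  have hsum := (hasSum_geometric_of_lt_one (inv_nonneg.2 (zero_le_one.trans hβ.le))
    (inv_lt_one_of_one_lt₀ hβ)).mul_left β⁻¹
  have hlim : β⁻¹ * (1 - β⁻¹)⁻¹ = 1 / (β - 1) := by
    rw [← mul_inv, mul_sub, mul_one, mul_inv_cancel₀ (by positivity), one_div]
  rw [hlim] at hsum
  simpa only [pow_succ', mul_inv, inv_pow] using hsum

section DigitMass

variable {α : Type*} [DecidableEq α] {d : ℕ → α} {c : α}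

/-- The sum of `β⁻ⁱ` over the positions `i ≥ 1` at which the digit `c` occurs in the coding `d`
(with `d i` the digit in position `i + 1`). -/
def digitMass (β : ℝ) (d : ℕ → α) (c : α) : ℝ :=
  ∑' i : ℕ, if d i = c then (β ^ (i + 1))⁻¹ else 0

lemma summable_digitMass (hβ : 1 < β) (d : ℕ → α) (c : α) :
    Summable fun i : ℕ => if d i = c then (β ^ (i + 1))⁻¹ else 0 :=
  Summable.of_nonneg_of_le (fun i => by positivity)
    (fun i => (ite_le_sup _ _ _).trans_eq (sup_of_le_left (by positivity)))
    (hasSum_inv_pow_succ hβ).summable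

lemma digitMass_nonneg (hβ : 0 ≤ β) (d : ℕ → α) (c : α) : 0 ≤ digitMass β d c :=
  tsum_nonneg fun i => by positivity

lemma digitMass_eq_zero (h : ∀ i, d i ≠ c) : digitMass β d c = 0 := by
  simp [digitMass, h]

lemma one_le_mul_digitMass_head (hβ : 1 < β) (d : ℕ → α) : 1 ≤ β * digitMass β d (d 0) := by
  have hle : β⁻¹ ≤ digitMass β d (d 0) := by
    simpa [digitMass] using (summable_digitMass hβ d (d 0)).le_tsum 0 fun i _ => by positivity
  rwa [inv_le_iff_one_le_mul₀' (by positivity)] at hle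

lemma digitMass_of_periodic (hβ : 1 < β) {k : ℕ} (hper : Function.Periodic d k) (c : α) :
    (1 - (β ^ k)⁻¹) * digitMass β d c =
      ∑ i ∈ Finset.range k, if d i = c then (β ^ (i + 1))⁻¹ else 0 := by
  have htail : ∑' i : ℕ, (if d (i + k) = c then (β ^ (i + k + 1))⁻¹ else 0) =
      (β ^ k)⁻¹ * digitMass β d c := by
    rw [digitMass, ← tsum_mul_left]
    refine tsum_congr fun i => ?_
    rw [hper i, mul_ite, mul_zero, ← mul_inv, ← pow_add]
    ring_nf
  have hsplit := (summable_digitMass hβ d c).sum_add_tsum_nat_add k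
  rw [htail, ← digitMass] at hsplit
  linarith

lemma mul_digitMass_of_periodic_two (hβ : 1 < β) (hper : Function.Periodic d 2)
    (hc : d 0 ≠ c) : (β ^ 2 - 1) * digitMass β d c = if d 1 = c then 1 else 0 := by
  have h := digitMass_of_periodic hβ hper c
  rw [Finset.sum_range_succ, Finset.sum_range_one, if_neg hc, zero_add] at h
  have hpos : 0 < β ^ 2 := by positivity
  calc (β ^ 2 - 1) * digitMass β d c
      = β ^ 2 * ((1 - (β ^ 2)⁻¹) * digitMass β d c) := by field_simp
    _ = if d 1 = c then 1 else 0 := by rw [h, mul_ite, mul_zero, mul_inv_cancel₀ hpos.ne']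

end DigitMass

section Barycentric

variable {c p : ℝ × ℝ}

/-- The barycentric coordinate of `p` at the vertex `c / (β - 1)` of the triangle `Δ_β`, for
`c ∈ Ω`, scaled so that the three coordinates add up to `1 / (β - 1)`. A single formula serves all
three digits: it is `p.1` for `c = (1, 0)`, `p.2` for `c = (0, 1)` and `1 / (β - 1) - p.1 - p.2` for
`c = (0, 0)`. -/
def baryCoord (β : ℝ) (c p : ℝ × ℝ) : ℝ :=
  c.1 * p.1 + c.2 * p.2 + (1 - c.1 - c.2) * (1 / (β - 1) - p.1 - p.2)

lemma digit_pairing_eq_ite {d : ℝ × ℝ} (hc : c ∈ OmegaR) (hd : d ∈ OmegaR) :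
    c.1 * d.1 + c.2 * d.2 + (1 - c.1 - c.2) * (1 - d.1 - d.2) = if d = c then 1 else 0 := by
  rcases hc with rfl | rfl | rfl <;> rcases hd with rfl | rfl | rfl <;> norm_num

lemma mul_baryCoord_fmap {d : ℝ × ℝ} (hβ : 1 < β) (hc : c ∈ OmegaR) (hd : d ∈ OmegaR)
    (q : ℝ × ℝ) :
    β * baryCoord β c (fmap β d q) = baryCoord β c q + if d = c then 1 else 0 := by
  have hβ0 : β ≠ 0 := by positivity
  have hβ1 : β - 1 ≠ 0 := sub_ne_zero.2 hβ.ne'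
  rw [← digit_pairing_eq_ite hc hd]
  simp only [baryCoord, fmap, Prod.smul_fst, Prod.smul_snd, Prod.fst_add, Prod.snd_add, smul_eq_mul]
  field_simp
  ring

/-- The point `π_β(d) = ∑ dᵢ β⁻ⁱ` coded by the digit sequence `d`. -/
def codingValue (β : ℝ) (d : ℕ → ℝ × ℝ) : ℝ × ℝ :=
  ∑' i : ℕ, (β ^ (i + 1))⁻¹ • d i

lemma hasSum_codingValue (hβ : 1 < β) {d : ℕ → ℝ × ℝ} (hd : ∀ i, d i ∈ OmegaR) :
    HasSum (fun i : ℕ => (β ^ (i + 1))⁻¹ • d i) (codingValue β d) := by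
  refine (Summable.of_norm_bounded (hasSum_inv_pow_succ hβ).summable fun i => ?_).hasSum
  have hnorm : ‖d i‖ ≤ 1 := by rcases hd i with h | h | h <;> rw [h] <;> simp [Prod.norm_def]
  rw [norm_smul, Real.norm_of_nonneg (by positivity)]
  exact mul_le_of_le_one_right (by positivity) hnorm

lemma baryCoord_codingValue (hβ : 1 < β) (hc : c ∈ OmegaR) {d : ℕ → ℝ × ℝ}
    (hd : ∀ i, d i ∈ OmegaR) : baryCoord β c (codingValue β d) = digitMass β d c := by
  have hsum := hasSum_codingValue hβ hd
  have hfst := hsum.mapL (ContinuousLinearMap.fst ℝ ℝ ℝ)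
  have hsnd := hsum.mapL (ContinuousLinearMap.snd ℝ ℝ ℝ)
  have hbary : HasSum _ (baryCoord β c (codingValue β d)) :=
    ((hfst.mul_left c.1).add (hsnd.mul_left c.2)).add
      ((((hasSum_inv_pow_succ hβ).sub hfst).sub hsnd).mul_left (1 - c.1 - c.2))
  rw [← hbary.tsum_eq, digitMass]
  refine tsum_congr fun i => ?_
  calc _ = (β ^ (i + 1))⁻¹ * (c.1 * (d i).1 + c.2 * (d i).2 +
          (1 - c.1 - c.2) * (1 - (d i).1 - (d i).2)) := by
        simp only [ContinuousLinearMap.coe_fst', ContinuousLinearMap.coe_snd', Prod.smul_fst,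
          Prod.smul_snd, smul_eq_mul]
        ring
    _ = _ := by rw [digit_pairing_eq_ite hc (hd i), mul_ite, mul_one, mul_zero]

lemma codingValue_mem_Delta {d : ℕ → ℝ × ℝ} (hd : ∀ i, d i ∈ OmegaR) :
    codingValue β d ∈ Delta β :=
  subset_convexHull ℝ _ ⟨d, hd, rfl⟩

lemma vertex_mem_Delta (hβ : 1 < β) (hc : c ∈ OmegaR) : (1 / (β - 1)) • c ∈ Delta β := by
  rw [← ((hasSum_inv_pow_succ hβ).smul_const c).tsum_eq]
  exact codingValue_mem_Delta fun _ => hc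

lemma convex_setOf_baryCoord_nonneg (β : ℝ) (c : ℝ × ℝ) : Convex ℝ {p | 0 ≤ baryCoord β c p} := by
  intro p hp q hq a b ha hb hab
  have haffine : baryCoord β c (a • p + b • q) = a * baryCoord β c p + b * baryCoord β c q := by
    obtain rfl : b = 1 - a := by linarith
    simp only [baryCoord, Prod.fst_add, Prod.snd_add, Prod.smul_fst, Prod.smul_snd, smul_eq_mul]
    ring
  rw [mem_ofPred_eq, haffine]
  exact add_nonneg (mul_nonneg ha hp) (mul_nonneg hb hq)

lemma baryCoord_nonneg_of_mem_Delta (hβ : 1 < β) (hc : c ∈ OmegaR) (hp : p ∈ Delta β) :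
    0 ≤ baryCoord β c p := by
  refine convexHull_min ?_ (convex_setOf_baryCoord_nonneg β c) hp
  rintro _ ⟨d, hd, rfl⟩
  exact (digitMass_nonneg (by positivity) d c).trans_eq (baryCoord_codingValue hβ hc hd).symm

lemma mem_Delta_of_baryCoord_nonneg (hβ : 1 < β) (hp : ∀ c ∈ OmegaR, 0 ≤ baryCoord β c p) :
    p ∈ Delta β := by
  have hpos : 0 < β - 1 := sub_pos.2 hβ
  let digit : Fin 3 → ℝ × ℝ := ![(0, 0), (1, 0), (0, 1)]
  have hdigit (i : Fin 3) : digit i ∈ OmegaR := by fin_cases i <;> simp [digit, OmegaR]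
  have hweights : ∑ i, (β - 1) * baryCoord β (digit i) p = 1 := by
    simp only [Fin.sum_univ_three, digit, Matrix.cons_val, baryCoord]
    field_simp
    ring
  have hcomb : ∑ i, ((β - 1) * baryCoord β (digit i) p) • (1 / (β - 1)) • digit i = p := by
    ext <;> simp only [Fin.sum_univ_three, digit, Matrix.cons_val, baryCoord, Prod.fst_add,
      Prod.snd_add, Prod.smul_fst, Prod.smul_snd, smul_eq_mul] <;> field_simp <;> ring
  rw [← hcomb]
  exact (convex_convexHull ℝ _).sum_mem (fun i _ => mul_nonneg hpos.le (hp _ (hdigit i))) hweights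
    fun i _ => vertex_mem_Delta hβ (hdigit i)

lemma mem_image_fmap_Delta_iff {d : ℝ × ℝ} (hβ : 1 < β) (hd : d ∈ OmegaR)
    (hp : p ∈ Delta β) : p ∈ fmap β d '' Delta β ↔ 1 ≤ β * baryCoord β d p := by
  refine ⟨?_, fun hle => ?_⟩
  · rintro ⟨q, hq, rfl⟩
    rw [mul_baryCoord_fmap hβ hd hd, if_pos rfl]
    exact le_add_of_nonneg_left (baryCoord_nonneg_of_mem_Delta hβ hd hq)
  · have hinv : fmap β d (β • p - d) = p := by
      rw [fmap, sub_add_cancel, inv_smul_smul₀ (by positivity)]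
    refine ⟨β • p - d, mem_Delta_of_baryCoord_nonneg hβ fun c hc => ?_, hinv⟩
    have hshift := mul_baryCoord_fmap hβ hc hd (β • p - d)
    have hnonneg := mul_nonneg (zero_le_one.trans hβ.le) (baryCoord_nonneg_of_mem_Delta hβ hc hp)
    rw [hinv] at hshift
    split_ifs at hshift with hdc
    · subst hdc
      linarith
    · linarith

lemma mem_Ofat_iff (hβ : 1 < β) (hp : p ∈ Delta β) :
    p ∈ Ofat β ↔ ∃ c ∈ OmegaR, ∃ d ∈ OmegaR, c ≠ d ∧
      1 ≤ β * baryCoord β c p ∧ 1 ≤ β * baryCoord β d p := by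
  simp only [Ofat, mem_iUnion, mem_inter_iff, exists_prop]
  refine exists_congr fun c => and_congr_right fun hc => exists_congr fun d =>
    and_congr_right fun hd => and_congr_right fun _ => ?_
  rw [mem_image_fmap_Delta_iff hβ hc hp, mem_image_fmap_Delta_iff hβ hd hp]

end Barycentric

section Univoque

variable {d : ℕ → ℝ × ℝ}

lemma codingValue_notMem_Ofat_iff (hβ : 1 < β) (hd : ∀ i, d i ∈ OmegaR) :
    codingValue β d ∉ Ofat β ↔ ∀ c ∈ OmegaR, d 0 ≠ c → β * digitMass β d c < 1 := by
  have hcoord {c : ℝ × ℝ} (hc : c ∈ OmegaR) := baryCoord_codingValue hβ hc hd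
  rw [mem_Ofat_iff hβ (codingValue_mem_Delta hd)]
  constructor
  · intro hnot c hc hne
    by_contra! hle
    refine hnot ⟨d 0, hd 0, c, hc, hne, ?_⟩
    rw [hcoord (hd 0), hcoord hc]
    exact ⟨one_le_mul_digitMass_head hβ d, hle⟩
  · rintro hlt ⟨c, hc, e, he, hne, hcle, hele⟩
    rw [hcoord hc] at hcle
    rw [hcoord he] at hele
    by_cases h : d 0 = c
    · exact (hlt e he (h ▸ hne)).not_ge hele
    · exact (hlt c hc h).not_ge hcle

theorem mem_Ufat_iff (hβ : 1 < β) (hd : ∀ i, d i ∈ OmegaR) :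
    d ∈ Ufat β ↔
      ∀ n, ∀ c ∈ OmegaR, d n ≠ c → β * digitMass β (fun i => d (n + i)) c < 1 :=
  (and_iff_right hd).trans <| forall_congr' fun n =>
    codingValue_notMem_Ofat_iff hβ fun i => hd (n + i)

lemma const_mem_Ufat (hβ : 1 < β) {c : ℝ × ℝ} (hc : c ∈ OmegaR) : (fun _ => c) ∈ Ufat β := by
  refine (mem_Ufat_iff hβ fun _ => hc).2 fun _ e _ hne => ?_
  rw [digitMass_eq_zero fun _ => hne, mul_zero]
  exact one_pos

lemma mem_Ufat_of_periodic_two (hβ : Real.goldenRatio < β) (hd : ∀ i, d i ∈ OmegaR)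
    (hper : Function.Periodic d 2) : d ∈ Ufat β := by
  have hβ1 : 1 < β := Real.one_lt_goldenRatio.trans hβ
  have hquad : β < β ^ 2 - 1 := lt_sub_iff_add_lt.2 ((goldenRatio_lt_iff (by positivity)).1 hβ)
  refine (mem_Ufat_iff hβ1 hd).2 fun n c _ hne => ?_
  have hnonneg := digitMass_nonneg (zero_le_one.trans hβ1.le) (fun i => d (n + i)) c
  have hmass := mul_digitMass_of_periodic_two hβ1 (d := fun i => d (n + i))
    (fun i => hper (n + i)) hne
  rcases hnonneg.eq_or_lt with hzero | hpos
  · rw [← hzero, mul_zero]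
    exact one_pos
  · calc β * digitMass β (fun i => d (n + i)) c
        < (β ^ 2 - 1) * digitMass β (fun i => d (n + i)) c := mul_lt_mul_of_pos_right hquad hpos
      _ ≤ 1 := by rw [hmass]; split_ifs <;> norm_num

lemma goldenRatio_lt_of_mem_Ufat (hβ : 1 < β) (hd : d ∈ Ufat β)
    (hper : Function.Periodic d 2) (hne : d 0 ≠ d 1) : Real.goldenRatio < β := by
  have hlt : β * digitMass β d (d 1) < 1 := by
    simpa only [zero_add] using (mem_Ufat_iff hβ hd.1).1 hd 0 (d 1) (hd.1 1) hne
  have hmass := mul_digitMass_of_periodic_two hβ hper hne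
  rw [if_pos rfl] at hmass
  rw [← hmass] at hlt
  have hquad := lt_of_mul_lt_mul_right hlt (digitMass_nonneg (by positivity) d (d 1))
  exact (goldenRatio_lt_iff (by positivity)).2 (by linarith)

lemma exists_mem_Ufat_smallestPeriod_two_iff (hβ : 1 < β) :
    (∃ d ∈ Ufat β, SmallestPeriod d 2) ↔ Real.goldenRatio < β := by
  simp only [smallestPeriod_two_iff]
  refine ⟨fun ⟨d, hd, hper, hne⟩ => goldenRatio_lt_of_mem_Ufat hβ hd hper hne, fun hlt => ?_⟩
  let d : ℕ → ℝ × ℝ := fun i => if Even i then (0, 0) else (1, 0)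
  have hd (i : ℕ) : d i ∈ OmegaR := by
    by_cases h : Even i <;> simp [d, h, OmegaR]
  have hper : Function.Periodic d 2 := fun i => by simp [d, Nat.even_add]
  exact ⟨d, mem_Ufat_of_periodic_two hlt hd hper, hper, by simp [d]⟩

end Univoque

lemma betaK_eq_of_forall_iff {k : ℕ} {b : ℝ} (h1 : 1 ≤ b) (h2 : b < 2)
    (hiff : ∀ β ∈ Ioc (1 : ℝ) 2, (∃ d ∈ Ufat β, SmallestPeriod d k) ↔ b < β) :
    betaK k = b := by
  have hset : {β : ℝ | β ∈ Ioc (1 : ℝ) 2 ∧ ∃ d ∈ Ufat β, SmallestPeriod d k} = Ioc b 2 := by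
    ext β
    refine ⟨fun ⟨hβ, hex⟩ => ⟨(hiff β hβ).1 hex, hβ.2⟩, fun hβ => ?_⟩
    have hmem : β ∈ Ioc (1 : ℝ) 2 := ⟨h1.trans_lt hβ.1, hβ.2⟩
    exact ⟨hmem, (hiff β hmem).2 hβ.1⟩
  rw [betaK, hset, csInf_Ioc h2]

theorem stmt0_general :
    betaK 1 = 1 ∧ betaK 2 = (1 + Real.sqrt 5) / 2 ∧
    ∀ β : ℝ, 1 < β →
      ((∃ d ∈ Ufat β, SmallestPeriod d 2) ↔ (1 + Real.sqrt 5) / 2 < β) := by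
  refine ⟨betaK_eq_of_forall_iff le_rfl one_lt_two fun β hβ => ?_,
    betaK_eq_of_forall_iff Real.one_lt_goldenRatio.le Real.goldenRatio_lt_two
      fun _ hβ => exists_mem_Ufat_smallestPeriod_two_iff hβ.1,
    fun _ => exists_mem_Ufat_smallestPeriod_two_iff⟩
  have hzero : ((0, 0) : ℝ × ℝ) ∈ OmegaR := mem_insert _ _
  exact iff_of_true ⟨_, const_mem_Ufat hβ.1 hzero, smallestPeriod_const_one _⟩ hβ.1

/-- β₁ = 1 and β₂ = (1+√5)/2; moreover for β ∈ (1,2], 𝐔_β contains a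
sequence of smallest period 2 iff β > (1+√5)/2. -/
theorem stmt0 :
    FatSierpinski.betaK 1 = 1 ∧
    FatSierpinski.betaK 2 = (1 + Real.sqrt 5) / 2 ∧
    ∀ β ∈ Set.Ioc (1 : ℝ) 2,
      (∃ d ∈ FatSierpinski.Ufat β, FatSierpinski.SmallestPeriod d 2) ↔
        (1 + Real.sqrt 5) / 2 < β := by
  obtain ⟨hone, htwo, hiff⟩ := stmt0_general
  exact ⟨hone, htwo, fun β hβ => hiff β hβ.1⟩

end FatSierpinski
end
end

section
/- For every n ≥ 0, the quasi-greedy β_{3·2ⁿ}-expansion of 1 equals the periodic sequence (t_{n+1})^∞, i.e. δ(β_{3·2ⁿ}) = t_{n+1}^∞. -/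
open Filter Set

noncomputable section

namespace FatSierpinski

/-!
Read in barycentric coordinates, the overlap region gives: a non-constant periodic coding is
univoque in base `β` iff every shift of each of its three components has value less than `1`. Hence,
if the sequence `a` bounds lexicographically all shifts of all components of some coding of smallest
period `k`, and no such coding stays strictly below `a`, then `β_k` is the base in which `a` has
value `1`, and `a` is the quasi-greedy expansion. For `k = 3 * 2 ^ n` the sequence `a` is the image
of the `n`-th periodic approximation of the Thue–Morse sequence under the coding of a bit sequence
`f` by the triples `(1 - f i, 0, f (i + 1))`.

That nothing of smallest period `3 * 2 ^ n` stays strictly below `a` is a density argument. Below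
`a`, every `1` of a component starts a block of triples in which `1` has density at most `1/3`. The
three densities add up to `1`, so all of them are exactly `1/3`, which forces each letter to avoid a
residue class modulo `3`. Then some letter fills a residue class, and the coding is, up to a shift
and a permutation of the letters, the one built from a binary sequence `f`. All normalized shifts of
`f` lie below the `n`-th approximation, and undoing the Thue–Morse substitution one step at a time
shows that `f` has period `2 ^ k` for some `k < n`.
-/

section Sequences

variable {α : Type*}

/-- The sequence `x` with its first `n` terms dropped. -/
def shift (n : ℕ) (x : ℕ → α) : ℕ → α := fun i => x (n + i)

lemma shift_zero (x : ℕ → α) : shift 0 x = x :=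
  funext fun i => congrArg x (Nat.zero_add i)

lemma shift_shift (m n : ℕ) (x : ℕ → α) : shift m (shift n x) = shift (n + m) x :=
  funext fun i => congrArg x (Nat.add_assoc n m i).symm

lemma isBinary_shift {x : ℕ → ℕ} (hx : IsBinary x) (n : ℕ) : IsBinary (shift n x) :=
  fun i => hx (n + i)

lemma shift_eq_shift_of_periodic {x : ℕ → α} {p : ℕ} (hx : Function.Periodic x p) (m : ℕ) :
    shift (m + p) x = shift m x :=
  funext fun i => by
    simp only [shift, Nat.add_right_comm m p i]
    exact hx (m + i)

lemma periodic_of_periodic_shift {x : ℕ → α} {p q s : ℕ} (hp : 0 < p)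
    (hx : Function.Periodic x p) (hs : Function.Periodic (shift s x) q) :
    Function.Periodic x q := by
  have hsp : s ≤ s * p := Nat.le_mul_of_pos_right s hp
  have periodic_sp : Function.Periodic x (s * p) := hx.nsmul s
  intro i
  calc x (i + q) = x (i + q + s * p) := (periodic_sp _).symm
    _ = shift s x (i + (s * p - s) + q) := congrArg x (by omega)
    _ = shift s x (i + (s * p - s)) := hs _
    _ = x (i + s * p) := congrArg x (by omega)
    _ = x i := periodic_sp i

lemma toLex_lt_of_head_lt {x y : ℕ → ℕ} (h : x 0 < y 0) : toLex x < toLex y :=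
  ⟨0, fun _ hi => absurd hi (Nat.not_lt_zero _), h⟩

end Sequences

section Value

variable {β γ : ℝ} {a x y : ℕ → ℕ}

/-- The value `∑ x_i β^{-i}` of a digit sequence, 0-indexed like `SumsToOne`. -/
def betaVal (β : ℝ) (x : ℕ → ℕ) : ℝ := ∑' i : ℕ, (x i : ℝ) / β ^ (i + 1)

lemma hasSum_one_div_pow_succ (hβ : 1 < β) :
    HasSum (fun i : ℕ => 1 / β ^ (i + 1)) (1 / (β - 1)) := by
  have hβ0 : β ≠ 0 := by positivity
  have hβ1 : β - 1 ≠ 0 := sub_ne_zero.2 hβ.ne'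
  have geometric := (hasSum_geometric_of_lt_one (r := β⁻¹) (by positivity)
    (inv_lt_one_of_one_lt₀ hβ)).mul_left β⁻¹
  have total : β⁻¹ * (1 - β⁻¹)⁻¹ = 1 / (β - 1) := by field_simp
  rw [total] at geometric
  exact geometric.congr_fun fun i => by rw [pow_succ', one_div, mul_inv, inv_pow]

lemma div_pow_succ_le_one_div (hβ : 0 < β) (hx : IsBinary x) (i : ℕ) :
    (x i : ℝ) / β ^ (i + 1) ≤ 1 / β ^ (i + 1) := by
  have : (x i : ℝ) ≤ 1 := mod_cast hx i
  gcongr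

lemma summable_betaVal (hβ : 1 < β) (hx : IsBinary x) :
    Summable fun i : ℕ => (x i : ℝ) / β ^ (i + 1) :=
  .of_nonneg_of_le (fun _ => by positivity) (div_pow_succ_le_one_div (by positivity) hx)
    (hasSum_one_div_pow_succ hβ).summable

lemma betaVal_nonneg (hβ : 0 ≤ β) (x : ℕ → ℕ) : 0 ≤ betaVal β x :=
  tsum_nonneg fun _ => by positivity

lemma betaVal_le (hβ : 1 < β) (hx : IsBinary x) : betaVal β x ≤ 1 / (β - 1) :=
  hasSum_le (div_pow_succ_le_one_div (by positivity) hx)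
    (summable_betaVal hβ hx).hasSum (hasSum_one_div_pow_succ hβ)

lemma betaVal_pos (hβ : 1 < β) (hx : IsBinary x) {m : ℕ} (hm : x m ≠ 0) : 0 < betaVal β x := by
  have : 0 < (x m : ℝ) := mod_cast Nat.pos_of_ne_zero hm
  exact (summable_betaVal hβ hx).tsum_pos (fun _ => by positivity) m (by positivity)

lemma betaVal_eq_sum_add (hβ : 1 < β) (hx : IsBinary x) (m : ℕ) :
    betaVal β x =
      ∑ i ∈ Finset.range m, (x i : ℝ) / β ^ (i + 1) + betaVal β (shift m x) / β ^ m := by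
  simp only [betaVal]
  rw [← (summable_betaVal hβ hx).sum_add_tsum_nat_add m, ← tsum_div_const]
  congr 1
  refine tsum_congr fun i => ?_
  rw [shift, div_div, ← pow_add, add_comm m i, add_right_comm]

lemma betaVal_eq_head_add (hβ : 1 < β) (hx : IsBinary x) :
    betaVal β x = (x 0 + betaVal β (shift 1 x)) / β := by
  rw [betaVal_eq_sum_add hβ hx 1, Finset.sum_range_one, zero_add, pow_one, add_div]

lemma betaVal_sub_betaVal (hβ : 1 < β) (hx : IsBinary x) (hy : IsBinary y) {m : ℕ}
    (h : ∀ i < m, x i = y i) (hm : x m < y m) :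
    betaVal β y - betaVal β x =
      (1 + betaVal β (shift (m + 1) y) - betaVal β (shift (m + 1) x)) / β ^ (m + 1) := by
  have hxm : x m = 0 := by have := hy m; omega
  have hym : y m = 1 := by have := hy m; omega
  have prefix_eq : ∑ i ∈ Finset.range m, (x i : ℝ) / β ^ (i + 1) =
      ∑ i ∈ Finset.range m, (y i : ℝ) / β ^ (i + 1) :=
    Finset.sum_congr rfl fun i hi => by rw [h i (Finset.mem_range.1 hi)]
  rw [betaVal_eq_sum_add hβ hx (m + 1), betaVal_eq_sum_add hβ hy (m + 1), Finset.sum_range_succ,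
    Finset.sum_range_succ, prefix_eq, hxm, hym]
  push_cast
  ring

lemma betaVal_le_div_mul (hβ : 1 < β) (hβγ : β ≤ γ) (hx : IsBinary x) :
    betaVal γ x ≤ β / γ * betaVal β x := by
  have hβ0 : 0 < β := by positivity
  have hγ0 : 0 < γ := hβ0.trans_le hβγ
  rw [betaVal, betaVal, ← tsum_mul_left]
  refine (summable_betaVal (hβ.trans_le hβγ) hx).tsum_le_tsum (fun i => ?_)
    ((summable_betaVal hβ hx).mul_left _)
  calc (x i : ℝ) / γ ^ (i + 1) = x i / (γ * γ ^ i) := by rw [pow_succ']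
    _ ≤ x i / (γ * β ^ i) := by gcongr
    _ = β / γ * (x i / β ^ (i + 1)) := by rw [pow_succ']; field_simp

lemma betaVal_lt_one_of_lt (hβ : 1 < β) (hβγ : β < γ) (hx : IsBinary x)
    (h : betaVal β x ≤ 1) : betaVal γ x < 1 := by
  have hβ0 : 0 < β := by positivity
  have hγ0 : 0 < γ := hβ0.trans hβγ
  have ratio_lt_one : β / γ < 1 := (div_lt_one hγ0).2 hβγ
  calc betaVal γ x ≤ β / γ * betaVal β x := betaVal_le_div_mul hβ hβγ.le hx
    _ ≤ β / γ * 1 := by gcongr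
    _ < 1 := by rwa [mul_one]

-- The supremum `V` of the values of the shifts of `x` satisfies `V ≤ 1 + (V - 1) / β`.
lemma betaVal_le_one (hβ : 1 < β) (ha : IsBinary a) (hx : IsBinary x) (ha1 : betaVal β a = 1)
    (h : ∀ n, toLex (shift n x) ≤ toLex a) : betaVal β x ≤ 1 := by
  have hβ0 : 0 < β := by positivity
  set V : ℝ := ⨆ n, betaVal β (shift n x)
  have shift_le : ∀ n, betaVal β (shift n x) ≤ V :=
    le_ciSup ⟨1 / (β - 1), forall_mem_range.2 fun n => betaVal_le hβ (isBinary_shift hx n)⟩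
  by_contra! one_lt
  have one_lt_V : 1 < V := one_lt.trans_le (shift_zero x ▸ shift_le 0)
  have V_le : V ≤ 1 + (V - 1) / β := by
    refine ciSup_le fun n => ?_
    rcases (h n).lt_or_eq with ⟨m, agree, lt⟩ | heq
    · have diff := betaVal_sub_betaVal hβ (isBinary_shift hx n) ha agree lt
      rw [ha1, shift_shift] at diff
      have lower : (1 - V) / β ^ (m + 1) ≤ 1 - betaVal β (shift n x) := by
        rw [diff]
        have := betaVal_nonneg hβ0.le (shift (m + 1) a)
        have := shift_le (n + (m + 1))
        gcongr
        linarith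
      have : (V - 1) / β ^ (m + 1) ≤ (V - 1) / β :=
        div_le_div_of_nonneg_left (by linarith) hβ0 (le_self_pow₀ hβ.le m.succ_ne_zero)
      rw [← neg_sub, neg_div] at lower
      linarith
    · rw [toLex.injective heq, ha1]
      linarith [div_nonneg (sub_nonneg.2 one_lt_V.le) hβ0.le]
  linarith [div_lt_self (sub_pos.2 one_lt_V) hβ]

lemma exists_one_add_betaVal_shift_le (hβ : 1 < β) (ha : IsBinary a) (hx : IsBinary x)
    (ha1 : betaVal β a = 1) (hmax : ∀ n, toLex (shift n a) ≤ toLex a) (hlt : toLex a < toLex x) :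
    ∃ m, 1 + betaVal β (shift m x) / β ^ m ≤ betaVal β x := by
  obtain ⟨m, agree, lt⟩ := hlt
  refine ⟨m + 1, ?_⟩
  have tail_le : betaVal β (shift (m + 1) a) ≤ 1 :=
    betaVal_le_one hβ ha (isBinary_shift ha _) ha1 fun n => by
      rw [shift_shift]
      exact hmax _
  have : betaVal β (shift (m + 1) x) / β ^ (m + 1) ≤ betaVal β x - betaVal β a := by
    rw [betaVal_sub_betaVal hβ ha hx agree lt]
    gcongr
    linarith
  linarith

lemma toLex_lt_of_betaVal_lt_one (hβ : 1 < β) (ha : IsBinary a) (hx : IsBinary x)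
    (ha1 : betaVal β a = 1) (hmax : ∀ n, toLex (shift n a) ≤ toLex a)
    (hx1 : betaVal β x < 1) : toLex x < toLex a := by
  by_contra hle
  rcases (not_lt.1 hle).lt_or_eq with hlt | heq
  · obtain ⟨m, hm⟩ := exists_one_add_betaVal_shift_le hβ ha hx ha1 hmax hlt
    have : 0 ≤ betaVal β (shift m x) / β ^ m :=
      div_nonneg (betaVal_nonneg (by positivity) _) (by positivity)
    linarith
  · rw [← toLex.injective heq] at hx1
    exact hx1.ne ha1

lemma isQuasiGreedy_of_shift_le (hβ : 1 < β) (ha : IsBinary a) (hz : NotEndInZeros a)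
    (ha1 : betaVal β a = 1) (hmax : ∀ n, toLex (shift n a) ≤ toLex a) : IsQuasiGreedy β a := by
  refine ⟨ha, hz, ha1, fun b hb hbz hb1 => ?_⟩
  have b_le : toLex b ≤ toLex a := by
    by_contra! hlt
    obtain ⟨m, hm⟩ := exists_one_add_betaVal_shift_le hβ ha hb ha1 hmax hlt
    obtain ⟨i, hmi, hi⟩ := hbz m
    have tail_pos : 0 < betaVal β (shift m b) :=
      betaVal_pos hβ (isBinary_shift hb m) (m := i - m) (by rwa [shift, Nat.add_sub_cancel' hmi])
    have : 0 < betaVal β (shift m b) / β ^ m := by positivity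
    have : betaVal β b = 1 := hb1
    linarith
  exact b_le.lt_or_eq.imp_right fun h => toLex.injective h

lemma continuousOn_betaVal {b : ℝ} (hb : 1 < b) (hx : IsBinary x) :
    ContinuousOn (fun β => betaVal β x) (Ici b) := by
  have pos : ∀ β ∈ Ici b, 0 < β := fun β hβ => (zero_lt_one.trans hb).trans_le hβ
  refine continuousOn_tsum (u := fun i : ℕ => 1 / b ^ (i + 1)) (fun i β hβ => ?_)
    (hasSum_one_div_pow_succ hb).summable fun i β hβ => ?_
  · have : β ^ (i + 1) ≠ 0 := pow_ne_zero _ (pos β hβ).ne'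
    fun_prop (disch := assumption)
  · have := pos β hβ
    rw [Real.norm_of_nonneg (by positivity)]
    refine (div_pow_succ_le_one_div this hx i).trans ?_
    have : b ≤ β := hβ
    have : 0 < b := by positivity
    gcongr

lemma exists_one_le_betaVal (hx : IsBinary x) (hz : NotEndInZeros x) :
    ∃ β, 1 < β ∧ β ≤ 2 ∧ 1 ≤ betaVal β x := by
  obtain ⟨i, -, hi⟩ := hz 0
  obtain ⟨j, hij, hj⟩ := hz (i + 1)
  have xi : x i = 1 := by have := hx i; omega
  have xj : x j = 1 := by have := hx j; omega
  set β : ℝ := 2 ^ ((j + 1 : ℕ) : ℝ)⁻¹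
  have β_pow : β ^ (j + 1) = 2 := Real.rpow_inv_natCast_pow zero_le_two j.succ_ne_zero
  have hβ : 1 < β := Real.one_lt_rpow one_lt_two (by positivity)
  refine ⟨β, hβ, β_pow ▸ le_self_pow₀ hβ.le j.succ_ne_zero, ?_⟩
  have β_pow_le : β ^ (i + 1) ≤ 2 := β_pow ▸ pow_le_pow_right₀ hβ.le (by omega)
  calc (1 : ℝ) ≤ x i / β ^ (i + 1) + x j / β ^ (j + 1) := by
        rw [xi, xj, β_pow, Nat.cast_one]
        have : (1 : ℝ) / 2 ≤ 1 / β ^ (i + 1) := by gcongr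
        linarith
    _ = ∑ m ∈ {i, j}, (x m : ℝ) / β ^ (m + 1) := by rw [Finset.sum_pair (Nat.ne_of_lt hij)]
    _ ≤ betaVal β x :=
        (summable_betaVal hβ hx).sum_le_tsum _ fun _ _ => by positivity

lemma betaVal_two_lt_one (hx : IsBinary x) {i : ℕ} (hi : x i = 0) : betaVal 2 x < 1 := by
  have term_lt : (x i : ℝ) / 2 ^ (i + 1) < 1 / 2 ^ (i + 1) := by
    rw [hi, Nat.cast_zero, zero_div]
    positivity
  calc betaVal 2 x < 1 / (2 - 1) := hasSum_lt (div_pow_succ_le_one_div two_pos hx) term_lt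
        (summable_betaVal one_lt_two hx).hasSum (hasSum_one_div_pow_succ one_lt_two)
    _ = 1 := by norm_num

lemma exists_betaVal_eq_one (hx : IsBinary x) (hz : NotEndInZeros x) (h0 : ∃ i, x i = 0) :
    ∃ β ∈ Ioo (1 : ℝ) 2, betaVal β x = 1 := by
  obtain ⟨b, hb, hb2, one_le⟩ := exists_one_le_betaVal hx hz
  obtain ⟨i, hi⟩ := h0
  have lt_one := betaVal_two_lt_one hx hi
  obtain ⟨β, hβ, hβ1⟩ := intermediate_value_Icc' hb2
    ((continuousOn_betaVal hb hx).mono Icc_subset_Ici_self) ⟨lt_one.le, one_le⟩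
  refine ⟨β, ⟨hb.trans_le hβ.1, hβ.2.lt_of_ne ?_⟩, hβ1⟩
  rintro rfl
  exact lt_one.ne hβ1

end Value

section Gasket

variable {β : ℝ}

/-- The digits of `Ω`, numbered so that digit `j` has its mass in the `j`-th barycentric
coordinate. -/
def digit : Fin 3 → ℝ × ℝ := ![(1, 0), (0, 1), (0, 0)]

lemma digit_injective : Function.Injective digit := by
  intro i j
  fin_cases i <;> fin_cases j <;> simp [digit]

lemma range_digit : range digit = OmegaR := by
  ext p
  simp only [digit, OmegaR, Matrix.range_cons, Matrix.range_empty, mem_insert_iff,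
    mem_singleton_iff, mem_union, mem_empty_iff_false, or_false]
  tauto

lemma digit_mem (j : Fin 3) : digit j ∈ OmegaR := range_digit ▸ mem_range_self j

lemma exists_digit_comp_eq {d : ℕ → ℝ × ℝ} (hd : ∀ i, d i ∈ OmegaR) :
    ∃ D : ℕ → Fin 3, digit ∘ D = d := by
  rw [← range_digit] at hd
  choose D hD using hd
  exact ⟨D, funext hD⟩

/-- The indicator sequence of the occurrences of the letter `j` in `D`. -/
def component (D : ℕ → Fin 3) (j : Fin 3) : ℕ → ℕ := fun i => if D i = j then 1 else 0

lemma component_of_eq {D : ℕ → Fin 3} {i : ℕ} {j : Fin 3} (h : D i = j) : component D j i = 1 :=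
  if_pos h

lemma isBinary_component (D : ℕ → Fin 3) (j : Fin 3) : IsBinary (component D j) := fun i => by
  rw [component]
  split_ifs <;> simp

lemma isBinary_shift_component (D : ℕ → Fin 3) (j : Fin 3) (m : ℕ) :
    IsBinary (shift m (component D j)) :=
  isBinary_shift (isBinary_component D j) m

lemma periodic_component {D : ℕ → Fin 3} {k : ℕ} (hD : Function.Periodic D k) (j : Fin 3) :
    Function.Periodic (component D j) k := fun i => by rw [component, component, hD]

/-- The point coded by a digit sequence in base `β`. -/
def codingPoint (β : ℝ) (D : ℕ → Fin 3) : ℝ × ℝ := ∑' i : ℕ, (β ^ (i + 1))⁻¹ • digit (D i)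

/-- Barycentric coordinates, scaled to have sum `1 / (β - 1)`, in the triangle with vertices
`digit j / (β - 1)`. -/
def coord (β : ℝ) (p : ℝ × ℝ) : Fin 3 → ℝ := ![p.1, p.2, 1 / (β - 1) - p.1 - p.2]

lemma coord_smul_add_smul {s t : ℝ} (hst : s + t = 1) (p q : ℝ × ℝ) (j : Fin 3) :
    coord β (s • p + t • q) j = s * coord β p j + t * coord β q j := by
  obtain rfl : t = 1 - s := by linarith
  fin_cases j
  · rfl
  · rfl
  · change 1 / (β - 1) - (s * p.1 + (1 - s) * q.1) - (s * p.2 + (1 - s) * q.2) =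
      s * (1 / (β - 1) - p.1 - p.2) + (1 - s) * (1 / (β - 1) - q.1 - q.2)
    ring

lemma coord_smul_sub_digit (hβ : 1 < β) (p : ℝ × ℝ) (c j : Fin 3) :
    coord β (β • p - digit c) j = β * coord β p j - if j = c then 1 else 0 := by
  have : β - 1 ≠ 0 := sub_ne_zero.2 hβ.ne'
  fin_cases j <;> fin_cases c <;> simp [coord, digit] <;> field

lemma sum_coord (hβ : 1 < β) (p : ℝ × ℝ) : ∑ j, (β - 1) * coord β p j = 1 := by
  have : β - 1 ≠ 0 := sub_ne_zero.2 hβ.ne'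
  simp only [Fin.sum_univ_three, coord, Matrix.cons_val]
  field_simp
  ring

lemma sum_coord_smul_digit (hβ : 1 < β) (p : ℝ × ℝ) :
    ∑ j, ((β - 1) * coord β p j) • ((1 / (β - 1)) • digit j) = p := by
  have : β - 1 ≠ 0 := sub_ne_zero.2 hβ.ne'
  have scale (j : Fin 3) : (β - 1) * coord β p j * (1 / (β - 1)) = coord β p j := by field_simp
  simp_rw [smul_smul, scale]
  ext <;> simp [Fin.sum_univ_three, coord, digit]

lemma sum_betaVal_component (hβ : 1 < β) (D : ℕ → Fin 3) :
    betaVal β (component D 0) + betaVal β (component D 1) + betaVal β (component D 2) =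
      1 / (β - 1) := by
  have val (j : Fin 3) := (summable_betaVal hβ (isBinary_component D j)).hasSum
  refine (((val 0).add (val 1)).add (val 2)).unique
    ((hasSum_one_div_pow_succ hβ).congr_fun fun i => ?_)
  simp only [component]
  generalize D i = c
  fin_cases c <;> simp

lemma codingPoint_eq (hβ : 1 < β) (D : ℕ → Fin 3) :
    codingPoint β D = (betaVal β (component D 0), betaVal β (component D 1)) := by
  have val (j : Fin 3) := (summable_betaVal hβ (isBinary_component D j)).hasSum
  refine (((val 0).prodMk (val 1)).congr_fun fun i => ?_).tsum_eq
  simp only [component]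
  generalize D i = c
  fin_cases c <;> simp [digit]

lemma coord_codingPoint (hβ : 1 < β) (D : ℕ → Fin 3) (j : Fin 3) :
    coord β (codingPoint β D) j = betaVal β (component D j) := by
  have total := sum_betaVal_component hβ D
  rw [codingPoint_eq hβ]
  fin_cases j
  · rfl
  · rfl
  · change 1 / (β - 1) - betaVal β (component D 0) - betaVal β (component D 1) =
      betaVal β (component D 2)
    linarith

lemma codingPoint_const (hβ : 1 < β) (j : Fin 3) :
    codingPoint β (fun _ => j) = (1 / (β - 1)) • digit j := by
  simp only [codingPoint, ← one_div]
  exact ((hasSum_one_div_pow_succ hβ).smul_const (digit j)).tsum_eq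

lemma codingPoint_mem_Sfat (D : ℕ → Fin 3) : codingPoint β D ∈ Sfat β :=
  ⟨digit ∘ D, fun i => digit_mem (D i), rfl⟩

lemma mem_Delta_iff (hβ : 1 < β) {p : ℝ × ℝ} : p ∈ Delta β ↔ ∀ j, 0 ≤ coord β p j := by
  constructor
  · have convex : Convex ℝ {q : ℝ × ℝ | ∀ j, 0 ≤ coord β q j} := by
      intro q hq r hr s t hs ht hst j
      rw [coord_smul_add_smul hst]
      exact add_nonneg (mul_nonneg hs (hq j)) (mul_nonneg ht (hr j))
    refine fun hp => convexHull_min ?_ convex hp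
    rintro _ ⟨d, hd, rfl⟩ j
    obtain ⟨D, rfl⟩ := exists_digit_comp_eq hd
    exact (coord_codingPoint hβ D j).symm ▸ betaVal_nonneg (by positivity) _
  · intro h
    rw [← sum_coord_smul_digit hβ p]
    refine (convex_convexHull ℝ (Sfat β)).sum_mem
      (fun j _ => mul_nonneg (sub_nonneg.2 hβ.le) (h j)) (sum_coord hβ p) fun j _ => ?_
    rw [← codingPoint_const hβ]
    exact subset_convexHull ℝ _ (codingPoint_mem_Sfat _)

lemma mem_fmap_image_iff (hβ : β ≠ 0) {d p : ℝ × ℝ} {s : Set (ℝ × ℝ)} :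
    p ∈ fmap β d '' s ↔ β • p - d ∈ s := by
  constructor
  · rintro ⟨q, hq, rfl⟩
    rwa [fmap, smul_inv_smul₀ hβ, add_sub_cancel_right]
  · exact fun h => ⟨_, h, by rw [fmap, sub_add_cancel, inv_smul_smul₀ hβ]⟩

lemma betaVal_component_eq (hβ : 1 < β) (D : ℕ → Fin 3) (j : Fin 3) :
    betaVal β (component D j) =
      ((if D 0 = j then 1 else 0) + betaVal β (shift 1 (component D j))) / β := by
  rw [betaVal_eq_head_add hβ (isBinary_component D j), component]
  push_cast
  rfl

lemma codingPoint_mem_fmap_image_Delta_iff (hβ : 1 < β) (D : ℕ → Fin 3) (c : Fin 3) :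
    codingPoint β D ∈ fmap β (digit c) '' Delta β ↔
      D 0 = c ∨ 1 ≤ betaVal β (shift 1 (component D c)) := by
  have hβ0 : 0 < β := by positivity
  have tail_nonneg (j : Fin 3) : 0 ≤ betaVal β (shift 1 (component D j)) :=
    betaVal_nonneg hβ0.le _
  have coord_eq (j : Fin 3) : coord β (β • codingPoint β D - digit c) j =
      (if D 0 = j then 1 else 0) + betaVal β (shift 1 (component D j)) -
        if j = c then 1 else 0 := by
    rw [coord_smul_sub_digit hβ, coord_codingPoint hβ, betaVal_component_eq hβ,
      mul_div_cancel₀ _ hβ0.ne']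
  rw [mem_fmap_image_iff hβ0.ne', mem_Delta_iff hβ]
  simp only [coord_eq]
  constructor
  · refine fun h => or_iff_not_imp_left.2 fun hc => ?_
    simpa [hc] using h c
  · intro h j
    have := tail_nonneg j
    rcases eq_or_ne j c with rfl | hj
    · rcases h with h | h <;> split_ifs <;> linarith
    · rw [if_neg hj]
      split_ifs <;> linarith

lemma codingPoint_mem_Ofat_iff (hβ : 1 < β) (D : ℕ → Fin 3) :
    codingPoint β D ∈ Ofat β ↔ ∃ j, D 0 ≠ j ∧ 1 ≤ betaVal β (shift 1 (component D j)) := by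
  simp only [Ofat, ← range_digit, mem_iUnion, exists_range_iff, exists_prop, mem_inter_iff,
    digit_injective.ne_iff, codingPoint_mem_fmap_image_Delta_iff hβ]
  constructor
  · rintro ⟨c, e, hce, hc, he⟩
    by_cases h0 : D 0 = c
    · exact ⟨e, h0 ▸ hce, he.resolve_left (h0 ▸ hce)⟩
    · exact ⟨c, h0, hc.resolve_left h0⟩
  · rintro ⟨j, hj, one_le⟩
    exact ⟨D 0, j, hj, Or.inl rfl, Or.inr one_le⟩

lemma digit_comp_mem_Ufat_iff (hβ : 1 < β) {D : ℕ → Fin 3} :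
    digit ∘ D ∈ Ufat β ↔
      ∀ n j, D n ≠ j → betaVal β (shift (n + 1) (component D j)) < 1 := by
  have point_not_mem (n : ℕ) :
      ∑' i : ℕ, (β ^ (i + 1))⁻¹ • (digit ∘ D) (n + i) ∉ Ofat β ↔
        ∀ j, D n ≠ j → betaVal β (shift (n + 1) (component D j)) < 1 := by
    rw [← not_iff_not, not_not]
    refine (codingPoint_mem_Ofat_iff hβ (shift n D)).trans ?_
    push Not
    simp only [← shift_shift]
    rfl
  exact (and_iff_right fun i => digit_mem (D i)).trans (forall_congr' point_not_mem)

-- If a shift of a component has value at least one, then so do all earlier shifts, and by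
-- periodicity all shifts; but then every digit equals `j`.
lemma betaVal_shift_component_lt_one (hβ : 1 < β) (hβ2 : β ≤ 2) {D : ℕ → Fin 3} {k : ℕ}
    (hk : 0 < k) (hD : Function.Periodic D k) {j : Fin 3} (hj : ∃ i, D i ≠ j)
    (hU : digit ∘ D ∈ Ufat β) (m : ℕ) : betaVal β (shift m (component D j)) < 1 := by
  by_contra! one_le
  have digit_eq {n : ℕ} (h : 1 ≤ betaVal β (shift (n + 1) (component D j))) : D n = j := by
    by_contra hn
    exact ((digit_comp_mem_Ufat_iff hβ).1 hU n j hn).not_ge h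
  have one_le_pred {n : ℕ} (h : 1 ≤ betaVal β (shift (n + 1) (component D j))) :
      1 ≤ betaVal β (shift n (component D j)) := by
    have head := betaVal_component_eq hβ (shift n D) j
    rw [if_pos (show shift n D 0 = j from digit_eq h)] at head
    change betaVal β (shift n (component D j)) =
      (1 + betaVal β (shift 1 (shift n (component D j)))) / β at head
    rw [head, shift_shift, one_le_div (by positivity)]
    linarith
  have one_le_of_add {n : ℕ} : ∀ i, 1 ≤ betaVal β (shift (n + i) (component D j)) →
      1 ≤ betaVal β (shift n (component D j)) := by
    intro i
    induction i with
    | zero => exact id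
    | succ i ih => exact fun h => ih (one_le_pred h)
  obtain ⟨i, hi⟩ := hj
  have periodic : Function.Periodic (component D j) ((i + 1) * k) :=
    (periodic_component hD j).nsmul (i + 1)
  have le : i + 1 ≤ m + (i + 1) * k :=
    (Nat.le_mul_of_pos_right _ hk).trans (Nat.le_add_left _ _)
  refine hi (digit_eq (one_le_of_add (m + (i + 1) * k - (i + 1)) ?_))
  rwa [Nat.add_sub_cancel' le, shift_eq_shift_of_periodic periodic]

lemma smallestPeriod_comp_iff {α γ : Type*} {f : α → γ} (hf : Function.Injective f)
    {d : ℕ → α} {k : ℕ} : SmallestPeriod (f ∘ d) k ↔ SmallestPeriod d k := by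
  simp only [SmallestPeriod, Function.comp_apply, hf.eq_iff, hf.ne_iff]

lemma exists_ne_of_smallestPeriod {α : Type*} {d : ℕ → α} {k : ℕ} (hk : 2 ≤ k)
    (hd : SmallestPeriod d k) (c : α) : ∃ i, d i ≠ c := by
  by_contra! const
  obtain ⟨i, hi⟩ := hd.2.2 1 one_pos hk
  exact hi (by rw [const, const])

theorem betaK_eq {k : ℕ} {a : ℕ → ℕ} (hk : 2 ≤ k) (hβ : β ∈ Ioo (1 : ℝ) 2) (ha : IsBinary a)
    (ha1 : betaVal β a = 1) (hmax : ∀ n, toLex (shift n a) ≤ toLex a)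
    (hle : ∃ D : ℕ → Fin 3, SmallestPeriod D k ∧
      ∀ j m, toLex (shift m (component D j)) ≤ toLex a)
    (hnlt : ∀ D : ℕ → Fin 3, SmallestPeriod D k →
      ¬ ∀ j m, toLex (shift m (component D j)) < toLex a) :
    betaK k = β := by
  have mem_of_gt {γ : ℝ} (hβγ : β < γ) (hγ2 : γ ≤ 2) :
      γ ∈ {γ : ℝ | γ ∈ Ioc (1 : ℝ) 2 ∧ ∃ d ∈ Ufat γ, SmallestPeriod d k} := by
    obtain ⟨D, hD, shift_le⟩ := hle
    refine ⟨⟨hβ.1.trans hβγ, hγ2⟩, digit ∘ D, ?_, (smallestPeriod_comp_iff digit_injective).2 hD⟩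
    refine (digit_comp_mem_Ufat_iff (hβ.1.trans hβγ)).2 fun n j _ => ?_
    have binary := isBinary_shift_component D j (n + 1)
    refine betaVal_lt_one_of_lt hβ.1 hβγ binary (betaVal_le_one hβ.1 ha binary ha1 fun i => ?_)
    rw [shift_shift]
    exact shift_le j _
  refine csInf_eq_of_forall_ge_of_forall_gt_exists_lt ⟨2, mem_of_gt hβ.2 le_rfl⟩ ?_ ?_
  · rintro γ ⟨hγ, d, hd, hdk⟩
    obtain ⟨D, rfl⟩ := exists_digit_comp_eq hd.1
    have hDk := (smallestPeriod_comp_iff digit_injective).1 hdk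
    by_contra! hγβ
    refine hnlt D hDk fun j m => toLex_lt_of_betaVal_lt_one hβ.1 ha
      (isBinary_shift_component D j m) ha1 hmax ?_
    refine betaVal_lt_one_of_lt hγ.1 hγβ (isBinary_shift_component D j m) (le_of_lt ?_)
    exact betaVal_shift_component_lt_one hγ.1 hγ.2 hDk.1 hDk.2.1
      (exists_ne_of_smallestPeriod hk hDk j) hd m
  · intro w hw
    obtain ⟨γ, hβγ, hγ⟩ := exists_between (lt_min hw hβ.2)
    exact ⟨γ, mem_of_gt hβγ (hγ.le.trans (min_le_right _ _)), hγ.trans_le (min_le_left _ _)⟩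

end Gasket

section Morse

variable {f g : ℕ → ℕ}

/-- The Thue–Morse substitution `0 ↦ 01`, `1 ↦ 10` applied to a binary sequence. -/
def morseSubst (f : ℕ → ℕ) : ℕ → ℕ := fun i => if i % 2 = 0 then f (i / 2) else 1 - f (i / 2)

lemma morseSubst_two_mul (f : ℕ → ℕ) (i : ℕ) : morseSubst f (2 * i) = f i := by
  rw [morseSubst, if_pos (by omega), Nat.mul_div_cancel_left i two_pos]

lemma morseSubst_two_mul_add_one (f : ℕ → ℕ) (i : ℕ) :
    morseSubst f (2 * i + 1) = 1 - f i := by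
  rw [morseSubst, if_neg (by omega), show (2 * i + 1) / 2 = i by omega]

lemma forall_iff_even_odd {P : ℕ → Prop} : (∀ i, P i) ↔ ∀ i, P (2 * i) ∧ P (2 * i + 1) := by
  refine ⟨fun h i => ⟨h _, h _⟩, fun h i => ?_⟩
  obtain ⟨j, rfl | rfl⟩ := Nat.even_or_odd' i
  exacts [(h j).1, (h j).2]

lemma isBinary_morseSubst (hf : IsBinary f) : IsBinary (morseSubst f) :=
  forall_iff_even_odd.2 fun i =>
    ⟨morseSubst_two_mul f i ▸ hf i, morseSubst_two_mul_add_one f i ▸ Nat.sub_le _ _⟩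

lemma toLex_morseSubst_lt (h : toLex f < toLex g) :
    toLex (morseSubst f) < toLex (morseSubst g) := by
  obtain ⟨n, agree, lt⟩ := h
  refine ⟨2 * n, fun i hi => ?_, ?_⟩
  · have : f (i / 2) = g (i / 2) := agree _ (by omega)
    change morseSubst f i = morseSubst g i
    simp only [morseSubst, this]
  · change morseSubst f (2 * n) < morseSubst g (2 * n)
    rwa [morseSubst_two_mul, morseSubst_two_mul]

lemma toLex_morseSubst_strictMono :
    StrictMono fun x : Lex (ℕ → ℕ) => toLex (morseSubst (ofLex x)) :=
  fun _ _ => toLex_morseSubst_lt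

lemma toLex_morseSubst_lt_iff :
    toLex (morseSubst f) < toLex (morseSubst g) ↔ toLex f < toLex g :=
  toLex_morseSubst_strictMono.lt_iff_lt (a := toLex f) (b := toLex g)

lemma toLex_morseSubst_le_iff :
    toLex (morseSubst f) ≤ toLex (morseSubst g) ↔ toLex f ≤ toLex g :=
  toLex_morseSubst_strictMono.le_iff_le (a := toLex f) (b := toLex g)

lemma periodic_morseSubst_iff {p : ℕ} :
    Function.Periodic (morseSubst f) (2 * p) ↔ Function.Periodic f p := by
  refine ⟨fun h i => ?_, fun h => forall_iff_even_odd.2 fun i => ⟨?_, ?_⟩⟩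
  · have := h (2 * i)
    rwa [← Nat.mul_add, morseSubst_two_mul, morseSubst_two_mul] at this
  · rw [← Nat.mul_add, morseSubst_two_mul, morseSubst_two_mul, h]
  · rw [Nat.add_right_comm, ← Nat.mul_add, morseSubst_two_mul_add_one,
      morseSubst_two_mul_add_one, h]

lemma even_of_periodic_morseSubst (hf : IsBinary f) {p : ℕ}
    (hp : Function.Periodic (morseSubst f) p) : Even p := by
  by_contra hodd
  obtain ⟨q, rfl⟩ := Nat.not_even_iff_odd.1 hodd
  have shift_even (i : ℕ) : 1 - f (i + q) = f i := by
    rw [← morseSubst_two_mul_add_one, ← morseSubst_two_mul f i, ← hp (2 * i)]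
    congr 1
    ring
  have shift_odd (i : ℕ) : f (i + 1 + q) = 1 - f i := by
    rw [← morseSubst_two_mul_add_one, ← morseSubst_two_mul f (i + 1 + q), ← hp (2 * i + 1)]
    congr 1
    ring
  have const (i : ℕ) : f i = f 0 := by
    induction i with
    | zero => rfl
    | succ i ih =>
      have := shift_even (i + 1)
      have := shift_odd i
      have := hf i
      omega
  have := shift_even 0
  have := const (0 + q)
  omega

/-- The periodic approximations of the Thue–Morse sequence, starting from `0^∞`. -/
def thueMorse : ℕ → ℕ → ℕ
  | 0 => 0
  | n + 1 => morseSubst (thueMorse n)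

lemma isBinary_thueMorse : ∀ n, IsBinary (thueMorse n)
  | 0 => fun _ => zero_le_one
  | n + 1 => isBinary_morseSubst (isBinary_thueMorse n)

lemma thueMorse_zero_right : ∀ n, thueMorse n 0 = 0
  | 0 => rfl
  | n + 1 => (morseSubst_two_mul _ 0).trans (thueMorse_zero_right n)

lemma periodic_thueMorse : ∀ n, Function.Periodic (thueMorse n) (2 ^ n)
  | 0 => fun _ => rfl
  | n + 1 => pow_succ' 2 n ▸ periodic_morseSubst_iff.2 (periodic_thueMorse n)

lemma two_pow_dvd_of_periodic_thueMorse :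
    ∀ {n p : ℕ}, Function.Periodic (thueMorse n) p → 2 ^ n ∣ p
  | 0, p, _ => one_dvd p
  | n + 1, p, h => by
    obtain ⟨q, rfl⟩ := (even_of_periodic_morseSubst (isBinary_thueMorse n) h).two_dvd
    rw [pow_succ']
    exact mul_dvd_mul_left 2 (two_pow_dvd_of_periodic_thueMorse (periodic_morseSubst_iff.1 h))

lemma thueMorse_succ_add_two_pow (n : ℕ) :
    ∀ i, thueMorse (n + 1) (i + 2 ^ n) = 1 - thueMorse (n + 1) i := by
  induction n with
  | zero =>
    rw [zero_add, thueMorse, thueMorse, pow_zero]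
    refine forall_iff_even_odd.2 fun i => ⟨?_, ?_⟩
    · rw [morseSubst_two_mul_add_one, morseSubst_two_mul]
    · rw [morseSubst_two_mul_add_one]
      exact morseSubst_two_mul 0 (i + 1)
  | succ n ih =>
    rw [thueMorse, pow_succ']
    refine forall_iff_even_odd.2 fun i => ⟨?_, ?_⟩
    · rw [← Nat.mul_add, morseSubst_two_mul, morseSubst_two_mul, ih]
    · rw [Nat.add_right_comm, ← Nat.mul_add, morseSubst_two_mul_add_one,
        morseSubst_two_mul_add_one, ih]

lemma thueMorse_succ_of_lt : ∀ {n i : ℕ}, i < 2 ^ n → thueMorse (n + 1) i = thueMorse n i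
  | 0, i, h => by
    obtain rfl : i = 0 := Nat.lt_one_iff.1 h
    rw [thueMorse_zero_right, thueMorse_zero_right]
  | n + 1, i, h => by
    rw [pow_succ'] at h
    have ih : thueMorse (n + 1) (i / 2) = thueMorse n (i / 2) :=
      thueMorse_succ_of_lt (by omega)
    rw [thueMorse, morseSubst, ih, thueMorse, morseSubst]

/-- The shift of a binary sequence, complemented where necessary so as to start with `0`. -/
def normShift (f : ℕ → ℕ) (i : ℕ) : ℕ → ℕ := fun m => if f (i + m) = f i then 0 else 1

lemma isBinary_normShift (f : ℕ → ℕ) (i : ℕ) : IsBinary (normShift f i) := fun m => by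
  rw [normShift]
  split_ifs <;> simp

lemma normShift_zero_right (f : ℕ → ℕ) (i : ℕ) : normShift f i 0 = 0 := if_pos rfl

lemma normShift_shift (f : ℕ → ℕ) (s i : ℕ) : normShift (shift s f) i = normShift f (s + i) := by
  funext m
  simp only [normShift, shift, ← Nat.add_assoc]

lemma normShift_eq_shift (hf : IsBinary f) {i : ℕ} (hi : f i = 0) :
    normShift f i = shift i f := by
  funext m
  have := hf (i + m)
  simp only [normShift, shift]
  split_ifs <;> omega

lemma isBinary_one_sub (f : ℕ → ℕ) : IsBinary (1 - f) := fun i => Nat.sub_le 1 (f i)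

lemma normShift_one_sub (hf : IsBinary f) (i : ℕ) : normShift (1 - f) i = normShift f i := by
  funext m
  have := hf i
  have := hf (i + m)
  simp only [normShift, Pi.sub_apply, Pi.one_apply]
  split_ifs <;> omega

lemma normShift_morseSubst_two_mul (hf : IsBinary f) (i : ℕ) :
    normShift (morseSubst f) (2 * i) = morseSubst (normShift f i) := by
  refine funext (forall_iff_even_odd.2 fun m => ⟨?_, ?_⟩)
  · simp only [normShift, ← Nat.mul_add, morseSubst_two_mul]
  · have := hf i
    have := hf (i + m)
    simp only [normShift, ← Nat.add_assoc, ← Nat.mul_add, morseSubst_two_mul,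
      morseSubst_two_mul_add_one]
    split_ifs <;> omega

-- Past its initial `0` the sequence on the left is a concatenation of blocks `01` and `10`,
-- and the sequence on the right is `0(10)^∞`.
lemma toLex_normShift_morseSubst_two_mul_add_one_le (hf : IsBinary f) (p : ℕ) :
    toLex (normShift (morseSubst f) (2 * p + 1)) ≤ toLex (morseSubst 0) := by
  set x := normShift (morseSubst f) (2 * p + 1) with hx
  have block (i : ℕ) : x (2 * i + 2) = 1 - x (2 * i + 1) := by
    have := hf p
    have := hf (p + i + 1)
    simp only [hx, normShift, show 2 * p + 1 + (2 * i + 2) = 2 * (p + i + 1) + 1 by ring,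
      show 2 * p + 1 + (2 * i + 1) = 2 * (p + i + 1) by ring, morseSubst_two_mul,
      morseSubst_two_mul_add_one]
    split_ifs <;> omega
  by_contra hlt
  obtain ⟨n, agree, lt⟩ := not_le.1 hlt
  change ∀ i < n, morseSubst 0 i = x i at agree
  change morseSubst 0 n < x n at lt
  have xn : x n ≤ 1 := isBinary_normShift _ _ n
  obtain ⟨i, rfl | rfl⟩ := Nat.even_or_odd' n
  · cases i with
    | zero =>
      have : x (2 * 0) = 0 := normShift_zero_right _ _
      omega
    | succ i =>
      have := agree (2 * i + 1) (by omega)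
      rw [morseSubst_two_mul_add_one, Pi.zero_apply] at this
      have : x (2 * (i + 1)) = 1 - x (2 * i + 1) := block i
      omega
  · rw [morseSubst_two_mul_add_one, Pi.zero_apply] at lt
    omega

lemma toLex_zero_le (x : ℕ → ℕ) : toLex (0 : ℕ → ℕ) ≤ toLex x :=
  Pi.toLex_monotone fun i => Nat.zero_le (x i)

lemma toLex_normShift_thueMorse_le :
    ∀ n i, toLex (normShift (thueMorse n) i) ≤ toLex (thueMorse n)
  | 0, i => le_of_eq (congrArg toLex (funext fun _ => if_pos rfl))
  | n + 1, i => by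
    have binary := isBinary_thueMorse n
    obtain ⟨j, rfl | rfl⟩ := Nat.even_or_odd' i
    · rw [thueMorse, normShift_morseSubst_two_mul binary]
      exact toLex_morseSubst_le_iff.2 (toLex_normShift_thueMorse_le n j)
    · exact (toLex_normShift_morseSubst_two_mul_add_one_le binary j).trans
        (toLex_morseSubst_le_iff.2 (toLex_zero_le _))

end Morse

section Renormalization

variable {e f u : ℕ → ℕ}

lemma eq_zero_of_toLex_lt_morseSubst (he : IsBinary e) (he0 : e 0 = 0)
    (hlt : toLex u < toLex (morseSubst e)) (hu1 : u 1 = 1) {r : ℕ} (hr : 0 < r)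
    (h : ∀ i, 0 < i → i ≤ r → u (2 * i) = 1) : u (2 * r + 1) = 0 := by
  obtain ⟨n, agree, lt⟩ := hlt
  change ∀ i < n, u i = morseSubst e i at agree
  change u n < morseSubst e n at lt
  have e_eq_one {i : ℕ} (hi : 0 < i) (hir : i ≤ r) (hin : 2 * i < n) : e i = 1 := by
    rw [← morseSubst_two_mul e, ← agree _ hin, h i hi hir]
  obtain ⟨i, rfl | rfl⟩ := Nat.even_or_odd' n
  · rw [morseSubst_two_mul] at lt
    have hi : 0 < i := Nat.pos_of_ne_zero fun h0 => by
      rw [h0, he0] at lt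
      omega
    by_cases hir : i ≤ r
    · have := he i
      have := h i hi hir
      omega
    · rw [agree _ (by omega), morseSubst_two_mul_add_one, e_eq_one hr le_rfl (by omega)]
  · rw [morseSubst_two_mul_add_one] at lt
    have hi : 0 < i := Nat.pos_of_ne_zero fun h0 => by
      rw [h0, hu1] at lt
      omega
    rcases lt_trichotomy i r with hir | rfl | hir
    · have := e_eq_one hi hir.le (by omega)
      omega
    · omega
    · rw [agree _ (by omega), morseSubst_two_mul_add_one, e_eq_one hr le_rfl (by omega)]

-- Were `f (p + 2 * i + 1) = f (p + 2 * i)`, then the normalized shift at the last `p + 2 * j`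
-- where `f` takes the other value would be too large.
lemma ne_of_normShift_lt_morseSubst (he : IsBinary e) (he0 : e 0 = 0)
    (h : ∀ i, toLex (normShift f i) < toLex (morseSubst e)) {p : ℕ} (hp : f (p + 1) ≠ f p)
    (hp' : f (p + 2) = f (p + 1)) (i : ℕ) : f (p + 2 * i + 1) ≠ f (p + 2 * i) := by
  induction i using Nat.strong_induction_on with
  | _ i ih =>
  rcases Nat.eq_zero_or_pos i with rfl | hi
  · exact hp
  have earlier_ne : ∃ j < i, f (p + 2 * j) ≠ f (p + 2 * i) := by
    by_contra! eq
    have h0 := eq 0 hi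
    rcases (Nat.succ_le_of_lt hi).eq_or_lt with rfl | h1
    · exact hp (hp'.symm.trans h0.symm)
    · exact hp ((hp'.symm.trans (eq 1 h1)).trans h0.symm)
  obtain ⟨j₀, hj₀, ne₀⟩ := earlier_ne
  let differs : ℕ → Prop := fun j => f (p + 2 * j) ≠ f (p + 2 * i)
  set j := Nat.findGreatest differs i
  have hj : differs j := Nat.findGreatest_spec (P := differs) hj₀.le ne₀
  have hji : j < i := (Nat.findGreatest_le i).lt_of_ne fun eq => hj (by rw [← eq])
  have later_eq {t : ℕ} (hjt : j < t) (hti : t ≤ i) : f (p + 2 * t) = f (p + 2 * i) :=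
    not_not.1 (Nat.findGreatest_is_greatest hjt hti)
  have tail : normShift f (p + 2 * j) (2 * (i - j) + 1) = 0 := by
    refine eq_zero_of_toLex_lt_morseSubst he he0 (h _)
      (if_neg (ih j hji)) (Nat.sub_pos_of_lt hji) fun t ht hti => if_neg ?_
    rw [Nat.add_assoc, ← Nat.mul_add, later_eq (by omega) (by omega)]
    exact hj.symm
  intro eq
  rw [normShift, show p + 2 * j + (2 * (i - j) + 1) = p + 2 * i + 1 by omega, eq,
    if_neg hj.symm] at tail
  exact one_ne_zero tail

lemma exists_shift_eq_morseSubst (he : IsBinary e) (he0 : e 0 = 0) (hf : IsBinary f)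
    (h : ∀ i, toLex (normShift f i) < toLex (morseSubst e)) (hconst : ∃ p, f (p + 1) ≠ f p) :
    ∃ s g, IsBinary g ∧ shift s f = morseSubst g := by
  suffices ∃ s, ∀ i, f (s + 2 * i + 1) ≠ f (s + 2 * i) by
    obtain ⟨s, hs⟩ := this
    refine ⟨s, fun i => f (s + 2 * i), fun i => hf _,
      funext (forall_iff_even_odd.2 fun i => ⟨?_, ?_⟩)⟩
    · rw [morseSubst_two_mul, shift]
    · have := hs i
      have := hf (s + 2 * i)
      have := hf (s + 2 * i + 1)
      rw [morseSubst_two_mul_add_one, shift, ← Nat.add_assoc]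
      omega
  by_cases hrep : ∃ p, f (p + 1) ≠ f p ∧ f (p + 2) = f (p + 1)
  · obtain ⟨p, hp, hp'⟩ := hrep
    exact ⟨p, ne_of_normShift_lt_morseSubst he he0 h hp hp'⟩
  · push Not at hrep
    obtain ⟨p, hp⟩ := hconst
    have alternating (i : ℕ) : f (p + i + 1) ≠ f (p + i) := by
      induction i with
      | zero => exact hp
      | succ i ih => exact hrep _ ih
    exact ⟨p, fun i => alternating (2 * i)⟩

lemma exists_periodic_two_pow_of_normShift_lt {n : ℕ} (hf : IsBinary f)
    (hper : Function.Periodic f (2 ^ n))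
    (h : ∀ i, toLex (normShift f i) < toLex (thueMorse n)) :
    ∃ k < n, Function.Periodic f (2 ^ k) := by
  induction n generalizing f with
  | zero => exact absurd (toLex_zero_le _) (h 0).not_ge
  | succ n ih =>
    by_cases hconst : ∃ p, f (p + 1) ≠ f p
    · obtain ⟨s, g, hg, hs⟩ := exists_shift_eq_morseSubst (isBinary_thueMorse n)
        (thueMorse_zero_right n) hf h hconst
      have periodic_g : Function.Periodic g (2 ^ n) := by
        rw [← periodic_morseSubst_iff, ← hs, ← pow_succ']
        exact hper.const_add s
      have g_lt (i : ℕ) : toLex (normShift g i) < toLex (thueMorse n) := by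
        rw [← toLex_morseSubst_lt_iff, ← normShift_morseSubst_two_mul hg, ← hs, normShift_shift]
        exact h _
      obtain ⟨k, hk, hgk⟩ := ih hg periodic_g g_lt
      refine ⟨k + 1, Nat.succ_lt_succ hk, ?_⟩
      refine periodic_of_periodic_shift (pow_pos two_pos (n + 1)) hper (s := s) ?_
      rw [hs, pow_succ']
      exact periodic_morseSubst_iff.2 hgk
    · push Not at hconst
      exact ⟨0, n.succ_pos, hconst⟩

end Renormalization

section TripleCode

variable {e f g : ℕ → ℕ}

/-- The binary sequence with triples `(1 - f i, 0, f (i + 1))`. It turns the Thue–Morse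
approximations into the sequences `t_{n+1}^∞`, and complementation into `Θ`. -/
def tripleCode (f : ℕ → ℕ) : ℕ → ℕ := fun i =>
  if i % 3 = 0 then 1 - f (i / 3) else if i % 3 = 1 then 0 else f (i / 3 + 1)

lemma tripleCode_three_mul (f : ℕ → ℕ) (i : ℕ) : tripleCode f (3 * i) = 1 - f i := by
  rw [tripleCode, if_pos (by omega), Nat.mul_div_cancel_left i three_pos]

lemma tripleCode_three_mul_add_one (f : ℕ → ℕ) (i : ℕ) : tripleCode f (3 * i + 1) = 0 := by
  rw [tripleCode, if_neg (by omega), if_pos (by omega)]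

lemma tripleCode_three_mul_add_two (f : ℕ → ℕ) (i : ℕ) :
    tripleCode f (3 * i + 2) = f (i + 1) := by
  rw [tripleCode, if_neg (by omega), if_neg (by omega), show (3 * i + 2) / 3 = i by omega]

lemma forall_iff_triple {P : ℕ → Prop} :
    (∀ i, P i) ↔ ∀ i, P (3 * i) ∧ P (3 * i + 1) ∧ P (3 * i + 2) := by
  refine ⟨fun h i => ⟨h _, h _, h _⟩, fun h i => ?_⟩
  obtain ⟨h0, h1, h2⟩ := h (i / 3)
  have : i % 3 < 3 := Nat.mod_lt i three_pos
  rw [← Nat.div_add_mod i 3]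
  interval_cases i % 3
  exacts [h0, h1, h2]

lemma isBinary_tripleCode (hf : IsBinary f) : IsBinary (tripleCode f) :=
  forall_iff_triple.2 fun i =>
    ⟨tripleCode_three_mul f i ▸ Nat.sub_le _ _, tripleCode_three_mul_add_one f i ▸ zero_le_one,
      tripleCode_three_mul_add_two f i ▸ hf (i + 1)⟩

lemma shift_three_mul_tripleCode (f : ℕ → ℕ) (i : ℕ) :
    shift (3 * i) (tripleCode f) = tripleCode (shift i f) := by
  refine funext (forall_iff_triple.2 fun t => ?_)
  simp only [shift, ← Nat.add_assoc, ← Nat.mul_add, tripleCode_three_mul,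
    tripleCode_three_mul_add_one, tripleCode_three_mul_add_two, and_self]

lemma periodic_tripleCode {p : ℕ} (hf : Function.Periodic f p) :
    Function.Periodic (tripleCode f) (3 * p) := fun i => by
  have : shift p f = f := funext fun j => by rw [shift, Nat.add_comm, hf]
  rw [Nat.add_comm]
  exact congrFun ((shift_three_mul_tripleCode f p).trans (congrArg tripleCode this)) i

lemma tripleCode_one_sub (hf : IsBinary f) (i : ℕ) :
    tripleCode (1 - f) i = if i % 3 = 1 then tripleCode f i else 1 - tripleCode f i := by
  have := hf (i / 3)
  simp only [tripleCode, Pi.sub_apply, Pi.one_apply]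
  split_ifs <;> omega

lemma toLex_tripleCode_lt (h0 : f 0 = g 0) (h : toLex f < toLex g) :
    toLex (tripleCode f) < toLex (tripleCode g) := by
  obtain ⟨n, agree, lt⟩ := h
  change ∀ i < n, f i = g i at agree
  change f n < g n at lt
  obtain ⟨p, rfl⟩ : ∃ p, n = p + 1 := Nat.exists_eq_succ_of_ne_zero fun hn => by
    rw [hn, h0] at lt
    exact lt_irrefl _ lt
  refine ⟨3 * p + 2, fun i hi => ?_, ?_⟩
  · change tripleCode f i = tripleCode g i
    simp only [tripleCode]
    split_ifs
    · rw [agree _ (by omega)]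
    · rfl
    · rw [agree _ (by omega)]
  · change tripleCode f (3 * p + 2) < tripleCode g (3 * p + 2)
    rwa [tripleCode_three_mul_add_two, tripleCode_three_mul_add_two]

lemma toLex_tripleCode_strictMonoOn (c : ℕ) :
    StrictMonoOn (fun x : Lex (ℕ → ℕ) => toLex (tripleCode (ofLex x))) {x | ofLex x 0 = c} :=
  fun _ hx _ hy => toLex_tripleCode_lt (hx.trans hy.symm)

lemma toLex_tripleCode_lt_iff (h0 : f 0 = g 0) :
    toLex (tripleCode f) < toLex (tripleCode g) ↔ toLex f < toLex g :=
  (toLex_tripleCode_strictMonoOn (g 0)).lt_iff_lt (a := toLex f) (b := toLex g) h0 rfl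

lemma toLex_tripleCode_le_iff (h0 : f 0 = g 0) :
    toLex (tripleCode f) ≤ toLex (tripleCode g) ↔ toLex f ≤ toLex g :=
  (toLex_tripleCode_strictMonoOn (g 0)).le_iff_le (a := toLex f) (b := toLex g) h0 rfl

lemma toLex_le_tripleCode_zero {y : ℕ → ℕ} (hy : IsBinary y)
    (h : ∀ i, y (3 * i) = 1 → y (3 * i + 1) = 0 ∧ y (3 * i + 2) = 0) :
    toLex y ≤ toLex (tripleCode 0) := by
  by_contra hlt
  obtain ⟨n, agree, lt⟩ := not_le.1 hlt
  change ∀ i < n, tripleCode 0 i = y i at agree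
  change tripleCode 0 n < y n at lt
  have yn := hy n
  have head : tripleCode 0 (3 * (n / 3)) = 1 := tripleCode_three_mul 0 (n / 3)
  rcases eq_or_ne n (3 * (n / 3)) with hn | hn
  · rw [← hn] at head
    omega
  · have := h (n / 3) ((agree _ (by omega)).symm.trans head)
    obtain hn | hn : n = 3 * (n / 3) + 1 ∨ n = 3 * (n / 3) + 2 := by omega
    all_goals rw [← hn] at this; omega

lemma toLex_shift_tripleCode_le (hf : IsBinary f) (he0 : e 0 = 0)
    (h : ∀ i, toLex (normShift f i) ≤ toLex e) (m : ℕ) :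
    toLex (shift m (tripleCode f)) ≤ toLex (tripleCode e) := by
  have code_zero : tripleCode e 0 = 1 := (tripleCode_three_mul e 0).trans (by rw [he0])
  have le_of_head {m : ℕ} (hm : tripleCode f m = 0) :
      toLex (shift m (tripleCode f)) ≤ toLex (tripleCode e) :=
    (toLex_lt_of_head_lt (hm.trans_lt (code_zero ▸ zero_lt_one))).le
  revert m
  refine forall_iff_triple.2 fun i => ⟨?_, le_of_head (tripleCode_three_mul_add_one f i), ?_⟩
  · rcases Nat.eq_zero_or_pos (f i) with hi | hi
    · rw [shift_three_mul_tripleCode, ← normShift_eq_shift hf hi,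
        toLex_tripleCode_le_iff ((normShift_zero_right f i).trans he0.symm)]
      exact h i
    · refine le_of_head ?_
      rw [tripleCode_three_mul]
      omega
  · refine (toLex_le_tripleCode_zero (isBinary_shift (isBinary_tripleCode hf) _) fun t => ?_).trans
      ((toLex_tripleCode_le_iff he0.symm).2 (toLex_zero_le e))
    simp only [shift, show 3 * i + 2 + 3 * t = 3 * (i + t) + 2 by ring,
      show 3 * i + 2 + (3 * t + 1) = 3 * (i + t + 1) by ring,
      show 3 * i + 2 + (3 * t + 2) = 3 * (i + t + 1) + 1 by ring, tripleCode_three_mul,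
      tripleCode_three_mul_add_one, tripleCode_three_mul_add_two]
    exact fun ht => ⟨Nat.sub_eq_zero_of_le ht.ge, trivial⟩

lemma toLex_normShift_lt_of_tripleCode_lt (hf : IsBinary f) (he0 : e 0 = 0)
    (h : ∀ m, toLex (shift m (tripleCode f)) < toLex (tripleCode e))
    (h' : ∀ m, toLex (shift m (tripleCode (1 - f))) < toLex (tripleCode e)) (i : ℕ) :
    toLex (normShift f i) < toLex e := by
  rw [← toLex_tripleCode_lt_iff ((normShift_zero_right f i).trans he0.symm)]
  rcases Nat.eq_zero_or_pos (f i) with hi | hi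
  · rw [normShift_eq_shift hf hi, ← shift_three_mul_tripleCode]
    exact h _
  · rw [← normShift_one_sub hf, normShift_eq_shift (isBinary_one_sub f)
      (Nat.sub_eq_zero_of_le hi), ← shift_three_mul_tripleCode]
    exact h' _

end TripleCode

section Blocks

lemma plusBlock_map_range {g h : ℕ → ℕ} {N : ℕ} (agree : ∀ i < N, g i = h i) (hN : h N = 1) :
    plusBlock ((List.range (N + 1)).map g) = (List.range (N + 1)).map h := by
  rw [plusBlock, List.range_succ, List.map_append, List.map_append, List.map_singleton,
    List.map_singleton, List.dropLast_concat, hN]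
  exact congrArg (· ++ [1]) (List.map_congr_left fun i hi => agree i (List.mem_range.1 hi))

lemma thetaBlock_map_range (g : ℕ → ℕ) (N : ℕ) :
    thetaBlock ((List.range N).map g) =
      (List.range N).map fun i => if i % 3 = 1 then g i else 1 - g i := by
  refine List.ext_getElem (by simp [thetaBlock]) fun i _ _ => ?_
  simp [thetaBlock]

lemma periodicSeq_map_range {g : ℕ → ℕ} {N : ℕ} (hN : 0 < N) (hg : Function.Periodic g N) :
    periodicSeq ((List.range N).map g) = g := by
  funext i
  rw [periodicSeq, List.length_map, List.length_range, ← hg.map_mod_nat i]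
  simp [Nat.mod_lt i hN]

lemma plusBlock_map_tripleCode_thueMorse (n : ℕ) :
    plusBlock ((List.range (3 * 2 ^ n)).map (tripleCode (thueMorse n))) =
      (List.range (3 * 2 ^ n)).map (tripleCode (thueMorse (n + 1))) := by
  have pos : 0 < 2 ^ n := by positivity
  have last : 3 * 2 ^ n = 3 * (2 ^ n - 1) + 2 + 1 := by omega
  rw [last]
  refine plusBlock_map_range (fun i hi => ?_) ?_
  · simp only [tripleCode]
    split_ifs
    · rw [thueMorse_succ_of_lt (by omega)]
    · rfl
    · rw [thueMorse_succ_of_lt (by omega)]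
  · rw [tripleCode_three_mul_add_two, Nat.sub_add_cancel pos, ← Nat.zero_add (2 ^ n),
      thueMorse_succ_add_two_pow, thueMorse_zero_right]

lemma tripleCode_thueMorse_succ_add (n i : ℕ) :
    tripleCode (thueMorse (n + 1)) (3 * 2 ^ n + i) =
      if i % 3 = 1 then tripleCode (thueMorse (n + 1)) i
      else 1 - tripleCode (thueMorse (n + 1)) i := by
  have half_shift : shift (2 ^ n) (thueMorse (n + 1)) = 1 - thueMorse (n + 1) :=
    funext fun j => by rw [shift, Nat.add_comm (2 ^ n), thueMorse_succ_add_two_pow]; rfl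
  rw [← tripleCode_one_sub (isBinary_thueMorse _), ← half_shift, ← shift_three_mul_tripleCode]
  rfl

lemma tB_eq_map_range (n : ℕ) :
    tB n = (List.range (3 * 2 ^ n)).map (tripleCode (thueMorse n)) := by
  induction n with
  | zero => rfl
  | succ n ih =>
    rw [tB, ih, plusBlock_map_tripleCode_thueMorse, thetaBlock_map_range,
      show 3 * 2 ^ (n + 1) = 3 * 2 ^ n + 3 * 2 ^ n by ring, List.range_add, List.map_append,
      List.map_map]
    exact congrArg _ (List.map_congr_left fun i _ => (tripleCode_thueMorse_succ_add n i).symm)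

lemma notEndInZeros_tripleCode_thueMorse (n : ℕ) :
    NotEndInZeros (tripleCode (thueMorse n)) := fun N => by
  have head : tripleCode (thueMorse n) 0 = 1 :=
    (tripleCode_three_mul _ 0).trans (by rw [thueMorse_zero_right])
  have periodic : Function.Periodic (tripleCode (thueMorse n)) (N * (3 * 2 ^ n)) :=
    (periodic_tripleCode (periodic_thueMorse n)).nsmul N
  refine ⟨N * (3 * 2 ^ n), Nat.le_mul_of_pos_right N (by positivity), ?_⟩
  rw [periodic.eq, head]
  exact one_ne_zero

lemma periodicSeq_tB (n : ℕ) : periodicSeq (tB n) = tripleCode (thueMorse n) := by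
  rw [tB_eq_map_range]
  exact periodicSeq_map_range (by positivity) (periodic_tripleCode (periodic_thueMorse n))

end Blocks

section TripleDigits

variable {f : ℕ → ℕ}

/-- The digit sequence whose first two components are `tripleCode f` and `tripleCode (1 - f)`, and
whose third component marks the middles of the triples. -/
def tripleDigits (f : ℕ → ℕ) : ℕ → Fin 3 := fun i =>
  if i % 3 = 0 then (if f (i / 3) = 0 then 0 else 1)
  else if i % 3 = 1 then 2
  else if f (i / 3 + 1) = 0 then 1 else 0

lemma tripleDigits_three_mul (f : ℕ → ℕ) (i : ℕ) :
    tripleDigits f (3 * i) = if f i = 0 then 0 else 1 := by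
  rw [tripleDigits, if_pos (by omega), Nat.mul_div_cancel_left i three_pos]

lemma tripleDigits_three_mul_add_one (f : ℕ → ℕ) (i : ℕ) : tripleDigits f (3 * i + 1) = 2 := by
  rw [tripleDigits, if_neg (by omega), if_pos (by omega)]

lemma tripleDigits_three_mul_add_two (f : ℕ → ℕ) (i : ℕ) :
    tripleDigits f (3 * i + 2) = if f (i + 1) = 0 then 1 else 0 := by
  rw [tripleDigits, if_neg (by omega), if_neg (by omega), show (3 * i + 2) / 3 = i by omega]

lemma component_tripleDigits_zero (hf : IsBinary f) :
    component (tripleDigits f) 0 = tripleCode f := by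
  funext i
  have := hf (i / 3)
  have := hf (i / 3 + 1)
  simp only [component, tripleDigits, tripleCode]
  split_ifs <;> omega

lemma component_tripleDigits_one (hf : IsBinary f) :
    component (tripleDigits f) 1 = tripleCode (1 - f) := by
  funext i
  have := hf (i / 3)
  have := hf (i / 3 + 1)
  simp only [component, tripleDigits, tripleCode, Pi.sub_apply, Pi.one_apply]
  split_ifs <;> omega

lemma tripleDigits_eq_two_iff {i : ℕ} : tripleDigits f i = 2 ↔ i % 3 = 1 := by
  simp only [tripleDigits]
  split_ifs <;> simp_all

lemma three_dvd_of_periodic_tripleDigits {p : ℕ} (h : Function.Periodic (tripleDigits f) p) :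
    3 ∣ p := by
  have : tripleDigits f (1 + p) = 2 := (h 1).trans (tripleDigits_eq_two_iff.2 rfl)
  have := tripleDigits_eq_two_iff.1 this
  omega

lemma tripleDigits_three_mul_eq_zero_iff {i : ℕ} : tripleDigits f (3 * i) = 0 ↔ f i = 0 := by
  simp [tripleDigits_three_mul]

lemma periodic_tripleDigits_iff (hf : IsBinary f) {p : ℕ} :
    Function.Periodic (tripleDigits f) (3 * p) ↔ Function.Periodic f p := by
  constructor
  · intro h i
    have := tripleDigits_three_mul_eq_zero_iff (f := f) (i := i + p)
    rw [Nat.mul_add, h, tripleDigits_three_mul_eq_zero_iff] at this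
    have := hf i
    have := hf (i + p)
    omega
  · intro h i
    simp only [tripleDigits, show (i + 3 * p) % 3 = i % 3 by omega,
      show (i + 3 * p) / 3 = i / 3 + p by omega, Nat.add_right_comm _ p 1, h _]

lemma smallestPeriod_tripleDigits_thueMorse (n : ℕ) :
    SmallestPeriod (tripleDigits (thueMorse n)) (3 * 2 ^ n) := by
  have binary := isBinary_thueMorse n
  refine ⟨by positivity, (periodic_tripleDigits_iff binary).2 (periodic_thueMorse n),
    fun p hp hlt => ?_⟩
  by_contra! periodic
  obtain ⟨q, rfl⟩ := three_dvd_of_periodic_tripleDigits periodic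
  have dvd := two_pow_dvd_of_periodic_thueMorse ((periodic_tripleDigits_iff binary).1 periodic)
  have := Nat.le_of_dvd (by omega) dvd
  omega

lemma toLex_shift_component_tripleDigits_two_le {e : ℕ → ℕ} (he0 : e 0 = 0) (m : ℕ) :
    toLex (shift m (component (tripleDigits f) 2)) ≤ toLex (tripleCode e) := by
  refine (toLex_le_tripleCode_zero (isBinary_shift_component _ _ _) fun t ht => ?_).trans
    ((toLex_tripleCode_le_iff he0.symm).2 (toLex_zero_le e))
  simp only [shift, component, tripleDigits_eq_two_iff] at ht ⊢
  split_ifs at ht ⊢ <;> omega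

lemma toLex_shift_component_tripleDigits_thueMorse_le (n : ℕ) (j : Fin 3) (m : ℕ) :
    toLex (shift m (component (tripleDigits (thueMorse n)) j)) ≤
      toLex (tripleCode (thueMorse n)) := by
  have binary := isBinary_thueMorse n
  have head := thueMorse_zero_right n
  fin_cases j
  · rw [Fin.zero_eta, component_tripleDigits_zero binary]
    exact toLex_shift_tripleCode_le binary head (toLex_normShift_thueMorse_le n) m
  · rw [Fin.mk_one, component_tripleDigits_one binary]
    refine toLex_shift_tripleCode_le (isBinary_one_sub _) head (fun i => ?_) m
    rw [normShift_one_sub binary]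
    exact toLex_normShift_thueMorse_le n i
  · exact toLex_shift_component_tripleDigits_two_le head m

end TripleDigits

section LightBlocks

variable {f x : ℕ → ℕ} {k : ℕ}

lemma sum_range_tripleCode (hf : IsBinary f) (hf0 : f 0 = 0) (l : ℕ) :
    ∑ m ∈ Finset.range (3 * l), tripleCode f m = l + f l := by
  induction l with
  | zero => simp [hf0]
  | succ l ih =>
    have := hf l
    rw [Nat.mul_succ, Finset.sum_range_succ, Finset.sum_range_succ, Finset.sum_range_succ, ih,
      tripleCode_three_mul, tripleCode_three_mul_add_one, tripleCode_three_mul_add_two]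
    omega

/-- Every occurrence of `1` in `x` starts a nonempty block of triples in which the digit `1` has
density at most `1/3` and never occurs in the middle of a triple. -/
def HasLightBlocks (x : ℕ → ℕ) : Prop :=
  ∀ i, x i = 1 → ∃ l > 0, ∑ m ∈ Finset.range (3 * l), x (i + m) ≤ l ∧
    ∀ t < l, x (i + 3 * t + 1) = 0

-- The block ends with the triple containing the first difference if that is the last digit of its
-- triple, and with the preceding triple otherwise.
lemma exists_light_block_of_lt_tripleCode (hf : IsBinary f) (hf0 : f 0 = 0) (hx0 : x 0 = 1)
    (h : toLex x < toLex (tripleCode f)) :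
    ∃ l > 0, ∑ m ∈ Finset.range (3 * l), x m ≤ l ∧ ∀ t < l, x (3 * t + 1) = 0 := by
  obtain ⟨m, agree, lt⟩ := h
  change ∀ i < m, x i = tripleCode f i at agree
  change x m < tripleCode f m at lt
  have sum_eq {N : ℕ} (hN : N ≤ m) :
      ∑ i ∈ Finset.range N, x i = ∑ i ∈ Finset.range N, tripleCode f i :=
    Finset.sum_congr rfl fun i hi => agree i ((Finset.mem_range.1 hi).trans_le hN)
  have middle {t : ℕ} (ht : 3 * t + 1 < m) : x (3 * t + 1) = 0 :=
    (agree _ ht).trans (tripleCode_three_mul_add_one f t)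
  obtain ⟨p, rfl | rfl | rfl⟩ : ∃ p, m = 3 * p ∨ m = 3 * p + 1 ∨ m = 3 * p + 2 :=
    ⟨m / 3, by omega⟩
  · rw [tripleCode_three_mul] at lt
    refine ⟨p, Nat.pos_of_ne_zero fun hp => ?_, ?_, fun t ht => middle (by omega)⟩
    · rw [hp, hx0] at lt
      omega
    · rw [sum_eq le_rfl, sum_range_tripleCode hf hf0]
      omega
  · exact absurd lt (tripleCode_three_mul_add_one f p ▸ Nat.not_lt_zero _)
  · refine ⟨p + 1, p.succ_pos, ?_, fun t ht => middle (by omega)⟩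
    have code_sum := sum_range_tripleCode hf hf0 (p + 1)
    have last := hf (p + 1)
    rw [tripleCode_three_mul_add_two] at lt
    rw [Nat.mul_succ, Finset.sum_range_succ, tripleCode_three_mul_add_two] at code_sum
    rw [Nat.mul_succ, Finset.sum_range_succ, sum_eq le_rfl]
    omega

lemma hasLightBlocks_of_shift_lt_tripleCode (hf : IsBinary f) (hf0 : f 0 = 0)
    (h : ∀ m, toLex (shift m x) < toLex (tripleCode f)) : HasLightBlocks x := fun i hi =>
  exists_light_block_of_lt_tripleCode hf hf0 (x := shift i x) hi (h i)

lemma HasLightBlocks.succ_eq_zero (h : HasLightBlocks x) {i : ℕ} (hi : x i = 1) :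
    x (i + 1) = 0 := by
  obtain ⟨l, hl, -, middle⟩ := h i hi
  exact middle 0 hl

/-- Three times the excess, over the first `i` digits, of the density `1/3` over the density of the
digit `1` in `x`. -/
def deficit (x : ℕ → ℕ) (i : ℕ) : ℤ := i - 3 * ∑ m ∈ Finset.range i, (x m : ℤ)

lemma deficit_add (x : ℕ → ℕ) (i l : ℕ) :
    deficit x (i + l) = deficit x i + l - 3 * ∑ m ∈ Finset.range l, (x (i + m) : ℤ) := by
  rw [deficit, deficit, Finset.sum_range_add]
  push_cast
  ring

lemma deficit_add_period (hp : Function.Periodic x k) (i : ℕ) :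
    deficit x (i + k) = deficit x i + deficit x k := by
  have sum_eq : ∑ m ∈ Finset.range i, (x (k + m) : ℤ) = ∑ m ∈ Finset.range i, (x m : ℤ) :=
    Finset.sum_congr rfl fun m _ => by rw [Nat.add_comm k, hp]
  rw [Nat.add_comm, deficit_add, sum_eq, deficit, deficit]
  ring

lemma exists_forall_deficit_le (hk : 0 < k) (hp : Function.Periodic x k) (hd : deficit x k ≤ 0) :
    ∃ b, ∀ i, deficit x i ≤ deficit x b := by
  obtain ⟨b, -, hb⟩ := Finset.exists_max_image (Finset.range k) (deficit x)
    ⟨0, Finset.mem_range.2 hk⟩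
  refine ⟨b, fun i => ?_⟩
  induction i using Nat.strong_induction_on with
  | _ i ih =>
    rcases lt_or_ge i k with hik | hki
    · exact hb i (Finset.mem_range.2 hik)
    · have step := deficit_add_period hp (i - k)
      rw [Nat.sub_add_cancel hki] at step
      have := ih (i - k) (by omega)
      omega

lemma HasLightBlocks.exists_deficit_max_add (h : HasLightBlocks x) (hx : IsBinary x) {b : ℕ}
    (hb : ∀ i, deficit x i ≤ deficit x b) :
    ∃ l > 0, (∀ i, deficit x i ≤ deficit x (b + 3 * l)) ∧ ∀ t < l, x (b + 3 * t + 1) = 0 := by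
  have xb : x b = 1 := by
    have next := hb (b + 1)
    rw [deficit_add, Finset.sum_range_one, Nat.add_zero] at next
    have := hx b
    omega
  obtain ⟨l, hl, light, middle⟩ := h b xb
  refine ⟨l, hl, fun i => (hb i).trans ?_, middle⟩
  rw [deficit_add]
  zify at light
  push_cast
  linarith

lemma HasLightBlocks.deficit_nonneg (h : HasLightBlocks x) (hx : IsBinary x) (hk : 0 < k)
    (hp : Function.Periodic x k) : 0 ≤ deficit x k := by
  by_contra! hd
  have late_max (N : ℕ) : ∃ c ≥ N, ∀ i, deficit x i ≤ deficit x c := by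
    induction N with
    | zero =>
      obtain ⟨b, hb⟩ := exists_forall_deficit_le hk hp hd.le
      exact ⟨b, b.zero_le, hb⟩
    | succ N ih =>
      obtain ⟨c, hc, max⟩ := ih
      obtain ⟨l, hl, max', -⟩ := h.exists_deficit_max_add hx max
      exact ⟨c + 3 * l, by omega, max'⟩
  obtain ⟨c, hc, max⟩ := late_max k
  have step := deficit_add_period hp (c - k)
  rw [Nat.sub_add_cancel hc] at step
  have := max (c - k)
  omega

lemma HasLightBlocks.exists_residue_eq_zero (h : HasLightBlocks x) (hx : IsBinary x) (hk : 0 < k)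
    (hp : Function.Periodic x k) (hd : deficit x k ≤ 0) : ∃ b, ∀ m, x (b + 3 * m + 1) = 0 := by
  obtain ⟨b, hb⟩ := exists_forall_deficit_le hk hp hd
  refine ⟨b, fun m => ?_⟩
  induction m using Nat.strong_induction_on generalizing b with
  | _ m ih =>
    obtain ⟨l, hl, max, middle⟩ := h.exists_deficit_max_add hx hb
    rcases lt_or_ge m l with hm | hm
    · exact middle m hm
    · have := ih (m - l) (by omega) (b + 3 * l) max
      rwa [Nat.add_assoc b, ← Nat.mul_add, Nat.add_sub_cancel' hm] at this

end LightBlocks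

section ConstantResidue

variable {D : ℕ → Fin 3} {k : ℕ}

lemma sum_component (D : ℕ → Fin 3) (i : ℕ) : ∑ j, component D j i = 1 := by
  simp [component]

lemma sum_deficit_component (D : ℕ → Fin 3) (i : ℕ) : ∑ j, deficit (component D j) i = 0 := by
  have total : ∑ j, ∑ m ∈ Finset.range i, (component D j m : ℤ) = i := by
    rw [Finset.sum_comm]
    simp [← Nat.cast_sum, sum_component]
  simp only [deficit, Finset.sum_sub_distrib, ← Finset.mul_sum, total]
  simp

lemma deficit_component_eq_zero (hk : 0 < k) (hD : Function.Periodic D k)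
    (h : ∀ j, HasLightBlocks (component D j)) (j : Fin 3) : deficit (component D j) k = 0 :=
  (Finset.sum_eq_zero_iff_of_nonneg fun j _ => (h j).deficit_nonneg (isBinary_component D j) hk
    (periodic_component hD j)).1 (sum_deficit_component D k) j (Finset.mem_univ j)

lemma exists_residue_forall_ne (hk : 0 < k) (hD : Function.Periodic D k)
    (h : ∀ j, HasLightBlocks (component D j)) (j : Fin 3) :
    ∃ r : ZMod 3, ∀ i : ℕ, (i : ZMod 3) = r → D i ≠ j := by
  have periodic := periodic_component hD j
  obtain ⟨b, hb⟩ := (h j).exists_residue_eq_zero (isBinary_component D j) hk periodic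
    (deficit_component_eq_zero hk hD h j).le
  refine ⟨(b + 1 : ℕ), fun i hi hij => ?_⟩
  rw [ZMod.natCast_eq_natCast_iff'] at hi
  have late : b + 1 ≤ (b + 1) * k := Nat.le_mul_of_pos_right _ hk
  have periodic_mul : Function.Periodic (component D j) (3 * ((b + 1) * k)) :=
    (periodic.nsmul (b + 1)).nsmul 3
  obtain ⟨m, hm⟩ : ∃ m, i + 3 * ((b + 1) * k) = b + 3 * m + 1 :=
    ⟨(i + 3 * ((b + 1) * k) - (b + 1)) / 3, by omega⟩
  have zero := hb m
  rw [← hm, periodic_mul, component_of_eq hij] at zero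
  exact one_ne_zero zero

lemma succ_ne_of_hasLightBlocks (h : ∀ j, HasLightBlocks (component D j)) (i : ℕ) :
    D (i + 1) ≠ D i := fun eq =>
  one_ne_zero ((component_of_eq eq).symm.trans ((h (D i)).succ_eq_zero (component_of_eq rfl)))

lemma exists_forall_add_eq {u : ℕ → ZMod 3} (hu : ∀ i, u i ≠ 0) (hsucc : ∀ i, u (i + 1) + 1 ≠ u i) :
    ∃ q, ∀ i, u (q + i) = u q := by
  by_cases htwo : ∃ q, u q = 2
  · obtain ⟨q, hq⟩ := htwo
    have two_of_two : ∀ a b : ZMod 3, a ≠ 0 → a + 1 ≠ b → b = 2 → a = 2 := by decide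
    refine ⟨q, fun i => hq ▸ ?_⟩
    induction i with
    | zero => exact hq
    | succ i ih => exact two_of_two _ _ (hu _) (hsucc _) ih
  · push Not at htwo
    have eq_one : ∀ a : ZMod 3, a ≠ 0 → a ≠ 2 → a = 1 := by decide
    exact ⟨0, fun i => (eq_one _ (hu _) (htwo _)).trans (eq_one _ (hu _) (htwo _)).symm⟩

lemma exists_forall_add_three_mul_eq {r : Fin 3 → ZMod 3}
    (hr : ∀ j, ∀ i : ℕ, (i : ZMod 3) = r j → D i ≠ j) (hD : ∀ i, D (i + 1) ≠ D i) :
    ∃ q c, ∀ m, D (q + 3 * m) = c := by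
  have cast_add (q m : ℕ) : ((q + 3 * m : ℕ) : ZMod 3) = q := by
    rw [ZMod.natCast_eq_natCast_iff']
    omega
  by_cases inj : Function.Injective r
  · obtain ⟨q, hq⟩ := exists_forall_add_eq (u := fun i => r (D i) - i)
      (fun i => sub_ne_zero.2 fun eq => hr _ i eq.symm rfl) fun i eq => hD i (inj (by
        push_cast at eq
        linear_combination eq))
    refine ⟨q, D q, fun m => inj ?_⟩
    have := hq (3 * m)
    rwa [cast_add, sub_left_inj] at this
  · obtain ⟨a, b, hab, hne⟩ := Function.not_injective_iff.1 inj
    have third_letter : ∀ a b : Fin 3, a ≠ b → ∃ c, ∀ d, d ≠ a → d ≠ b → d = c := by decide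
    obtain ⟨c, hc⟩ := third_letter a b hne
    have residue (m : ℕ) : (((r a).val + 3 * m : ℕ) : ZMod 3) = r a := by
      rw [cast_add, ZMod.natCast_zmod_val]
    exact ⟨(r a).val, c, fun m => hc _ (hr a _ (residue m)) (hr b _ ((residue m).trans hab))⟩

end ConstantResidue

section NormalForm

variable {D : ℕ → Fin 3}

lemma eq_tripleDigits (hD : ∀ i, D (i + 1) ≠ D i) (htwo : ∀ i, D (3 * i + 1) = 2) :
    D = tripleDigits fun i => component D 1 (3 * i) := by
  have swap_ne : ∀ a b : Fin 3, a ≠ 2 → b ≠ 2 → b ≠ a →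
      a = if (if b = 1 then 1 else 0) = 0 then 1 else 0 := by decide
  have eq_ite : ∀ a : Fin 3, a ≠ 2 → a = if (if a = 1 then 1 else 0) = 0 then 0 else 1 := by
    decide
  have ne_two_left (i : ℕ) : D (3 * i) ≠ 2 := htwo i ▸ (hD (3 * i)).symm
  have ne_two_right (i : ℕ) : D (3 * i + 2) ≠ 2 := htwo i ▸ hD (3 * i + 1)
  refine funext (forall_iff_triple.2 fun i => ⟨?_, ?_, ?_⟩)
  · rw [tripleDigits_three_mul]
    exact eq_ite _ (ne_two_left i)
  · rw [tripleDigits_three_mul_add_one, htwo]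
  · rw [tripleDigits_three_mul_add_two]
    exact swap_ne _ _ (ne_two_right i) (ne_two_left (i + 1)) (hD (3 * i + 2))

lemma component_perm_comp (σ : Equiv.Perm (Fin 3)) (D : ℕ → Fin 3) (j : Fin 3) :
    component (σ ∘ D) (σ j) = component D j := by
  funext i
  simp only [component, Function.comp_apply, σ.injective.eq_iff]

lemma exists_shift_eq_perm_tripleDigits {q : ℕ} {c : Fin 3} (hD : ∀ i, D (i + 1) ≠ D i)
    (hc : ∀ m, D (q + 3 * m) = c) :
    ∃ (s : ℕ) (σ : Equiv.Perm (Fin 3)) (f : ℕ → ℕ),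
      IsBinary f ∧ shift s D = σ ∘ tripleDigits f := by
  set σ := Equiv.swap 2 c
  set E := σ ∘ shift (q + 2) D
  have E_eq : E = tripleDigits fun i => component E 1 (3 * i) := by
    refine eq_tripleDigits (fun i => σ.injective.ne (hD (q + 2 + i))) fun i => ?_
    change σ (D (q + 2 + (3 * i + 1))) = 2
    rw [show q + 2 + (3 * i + 1) = q + 3 * (i + 1) by ring, hc]
    exact Equiv.swap_apply_right 2 c
  refine ⟨q + 2, σ, _, fun i => isBinary_component E 1 (3 * i), ?_⟩
  rw [← E_eq]
  funext i
  exact (Equiv.symm_apply_apply σ _).symm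

theorem exists_periodic_of_shift_component_lt {n : ℕ} (hD : Function.Periodic D (3 * 2 ^ n))
    (h : ∀ j m, toLex (shift m (component D j)) < toLex (tripleCode (thueMorse n))) :
    ∃ k < n, Function.Periodic D (3 * 2 ^ k) := by
  have binary := isBinary_thueMorse n
  have head := thueMorse_zero_right n
  have pos : 0 < 3 * 2 ^ n := by positivity
  have light (j : Fin 3) : HasLightBlocks (component D j) :=
    hasLightBlocks_of_shift_lt_tripleCode binary head (h j)
  have no_repeat := succ_ne_of_hasLightBlocks light
  choose r hr using exists_residue_forall_ne pos hD light
  obtain ⟨q, c, hc⟩ := exists_forall_add_three_mul_eq hr no_repeat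
  obtain ⟨s, σ, f, hf, hs⟩ := exists_shift_eq_perm_tripleDigits no_repeat hc
  have shift_lt (j : Fin 3) (m : ℕ) :
      toLex (shift m (component (tripleDigits f) j)) < toLex (tripleCode (thueMorse n)) := by
    rw [← component_perm_comp σ, ← hs]
    change toLex (shift m (shift s (component D (σ j)))) < _
    rw [shift_shift]
    exact h _ _
  have normShift_lt := toLex_normShift_lt_of_tripleCode_lt hf head
    (component_tripleDigits_zero hf ▸ shift_lt 0) (component_tripleDigits_one hf ▸ shift_lt 1)
  have periodic_f : Function.Periodic f (2 ^ n) := by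
    have periodic_shift : Function.Periodic (shift s D) (3 * 2 ^ n) := hD.const_add s
    rw [hs] at periodic_shift
    exact (periodic_tripleDigits_iff hf).1 fun i => σ.injective (periodic_shift i)
  obtain ⟨k, hkn, hk⟩ := exists_periodic_two_pow_of_normShift_lt hf periodic_f normShift_lt
  refine ⟨k, hkn, periodic_of_periodic_shift pos hD (s := s) ?_⟩
  rw [hs]
  exact ((periodic_tripleDigits_iff hf).2 hk).comp σ

end NormalForm

/-- δ(β_{3·2ⁿ}) = (t_{n+1})^∞ for every n ≥ 0 (here `tB n = t_{n+1}`). -/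
theorem stmt1 (n : ℕ) :
    FatSierpinski.IsQuasiGreedy (FatSierpinski.betaK (3 * 2 ^ n))
      (FatSierpinski.periodicSeq (FatSierpinski.tB n)) := by
  have binary := isBinary_tripleCode (isBinary_thueMorse n)
  have not_zeros := notEndInZeros_tripleCode_thueMorse n
  have shift_le := toLex_shift_tripleCode_le (isBinary_thueMorse n) (thueMorse_zero_right n)
    (toLex_normShift_thueMorse_le n)
  have no_shorter (D : ℕ → Fin 3) (hD : SmallestPeriod D (3 * 2 ^ n)) :
      ¬ ∀ j m, toLex (shift m (component D j)) < toLex (tripleCode (thueMorse n)) := fun h => by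
    obtain ⟨k, hkn, hk⟩ := exists_periodic_of_shift_component_lt hD.2.1 h
    obtain ⟨i, hi⟩ := hD.2.2 (3 * 2 ^ k) (by positivity) (by gcongr; norm_num)
    exact hi (hk i)
  obtain ⟨β, hβ, value⟩ := exists_betaVal_eq_one binary not_zeros
    ⟨1, tripleCode_three_mul_add_one (thueMorse n) 0⟩
  have two_le : 2 ≤ 3 * 2 ^ n := by
    have := Nat.one_le_two_pow (n := n)
    omega
  rw [periodicSeq_tB, betaK_eq two_le hβ binary value shift_le
    ⟨_, smallestPeriod_tripleDigits_thueMorse n,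
      toLex_shift_component_tripleDigits_thueMorse_le n⟩ no_shorter]
  exact isQuasiGreedy_of_shift_le hβ.1 binary not_zeros value shift_le

end FatSierpinski
end
end
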